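/- (Prolate spheroidal double layer potential, on-surface evaluation.) Fix a > 0, u₀ > 1, and integers n ≥ 0, 0 ≤ m ≤ n. Let the density be μ(s,t) = Y_n^m(s,t). Then for every on-surface target point x = Φ(u₀,v,φ) with v ∈ (−1,1), φ ∈ ℝ, the double layer integral D[μ](x) converges absolutely and equals ((n−m)!/(n+m)!)·(−1)^m·(u₀^2−1)·(1/2)·[(P_n^m)′(u₀)·Q_n^m(u₀) + (Q_n^m)′(u₀)·P_n^m(u₀)]·Y_n^m(v,φ), i.e. the singular double layer operator acts on the mode Y_n^m as multiplication by the average of the exterior and interior eigenvalues. -/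

import Mathlib

noncomputable section

open Real MeasureTheory

/-- Legendre polynomial via Rodrigues' formula. -/
def legendreP (n : ℕ) (x : ℝ) : ℝ :=
  (1 / (2 ^ n * (n.factorial : ℝ))) * iteratedDeriv n (fun y : ℝ => (y ^ 2 - 1) ^ n) x

/-- Legendre function of the second kind (Neumann's integral), for `x > 1`. -/
def legendreQ (n : ℕ) (x : ℝ) : ℝ :=
  (1 / 2) * ∫ t in (-1 : ℝ)..1, legendreP n t / (x - t)

/-- Associated Legendre function of the first kind, off the cut (`x > 1`). -/
def assocP (n m : ℕ) (x : ℝ) : ℝ :=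
  Real.sqrt (x ^ 2 - 1) ^ m * iteratedDeriv m (legendreP n) x

/-- Associated Legendre function of the second kind, off the cut (`x > 1`). -/
def assocQ (n m : ℕ) (x : ℝ) : ℝ :=
  Real.sqrt (x ^ 2 - 1) ^ m * iteratedDeriv m (legendreQ n) x

/-- Ferrers function of the first kind, on the cut (`-1 ≤ v ≤ 1`). -/
def ferrersP (n m : ℕ) (v : ℝ) : ℝ :=
  Real.sqrt (1 - v ^ 2) ^ m * iteratedDeriv m (legendreP n) v

/-- Prolate spheroidal coordinate map. -/
def prolate (a u v φ : ℝ) : EuclideanSpace ℝ (Fin 3) :=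
  (WithLp.equiv 2 (Fin 3 → ℝ)).symm
    ![a * Real.sqrt (u ^ 2 - 1) * Real.sqrt (1 - v ^ 2) * Real.cos φ,
      a * Real.sqrt (u ^ 2 - 1) * Real.sqrt (1 - v ^ 2) * Real.sin φ,
      a * u * v]

/-- Surface spheroidal (= spherical) harmonic `Y_n^m(v, φ)`. -/
def sphY (n m : ℕ) (v φ : ℝ) : ℂ :=
  ((Real.sqrt ((2 * (n : ℝ) + 1) / (4 * Real.pi)) *
      Real.sqrt (((n - m).factorial : ℝ) / ((n + m).factorial : ℝ)) * ferrersP n m v : ℝ) : ℂ) *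
    Complex.exp (Complex.I * m * φ)

/-- Outward unit normal on the prolate spheroid `u = u₀`, at surface parameters `(s, t)`. -/
def unitNormalP (a u₀ s t : ℝ) : EuclideanSpace ℝ (Fin 3) :=
  ‖deriv (fun w => prolate a w s t) u₀‖⁻¹ • deriv (fun w => prolate a w s t) u₀

/-- Surface area element on the prolate spheroid `u = u₀`. -/
def areaElemP (a u₀ s : ℝ) : ℝ := a ^ 2 * Real.sqrt (u₀ ^ 2 - s ^ 2) * Real.sqrt (u₀ ^ 2 - 1)

/-- Laplace double layer potential on the prolate spheroid `u = u₀`. -/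
def doubleLayerP (a u₀ : ℝ) (μ : ℝ → ℝ → ℂ) (x : EuclideanSpace ℝ (Fin 3)) : ℂ :=
  ∫ t in (0 : ℝ)..(2 * Real.pi), ∫ s in (-1 : ℝ)..1,
    ((((inner ℝ (unitNormalP a u₀ s t) (x - prolate a u₀ s t) : ℝ) /
        (4 * Real.pi * ‖x - prolate a u₀ s t‖ ^ 3)) * areaElemP a u₀ s : ℝ) : ℂ) * μ s t

open Filter Topology

/-!
Write `u₀ = cosh η`, `v = cos ν`, `s = cos θ`, and let `S(θ)T(t)` be a separated density. For a
confocal spheroid `e < η`, the moment `M(e)` of `1 / |x(e, θ, t) - X|` against `S T`, with `X` on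
the spheroid `η`, solves the radial Legendre equation in `e`: the Newton kernel is harmonic, and the
angular operators can be integrated by parts onto `S` and `T`. It is regular at the focal segment
`e = 0`, so its Wronskian with the first-kind solution `P` vanishes: `P M' = P' M`.

Letting `e` increase to `η` costs a jump, controlled by first subtracting from the density its value
`S(ν)T(φ)` at `X`: the unit-density moment is constant in `e < η`, and equals its elementary value
at `e = 0`. By symmetry of the kernel, the on-surface integral of the normal derivative is half the
`η`-derivative of the on-surface moment `γ(η)`, so the limit is a first-order equation
`P (γ' - S(ν)T(φ) γ₁') = 2 P' γ`, where `γ₁` is the moment of the unit density. Since `γ₁'` is a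
multiple of the Wronskian of `P` and the second-kind solution `Q`, this says that
`γ / P² - κ S(ν)T(φ) Q / P` is constant for some explicit `κ`; it vanishes at infinity, so
`γ = κ S(ν)T(φ) P Q`, and the double layer potential is a multiple of its derivative.
-/

/-! ### Legendre polynomials and their derivatives -/

section LegendrePolynomial

open Polynomial

/-- The Legendre polynomial `Pₙ` as an element of `ℝ[X]`, by Rodrigues' formula. -/
def legendrePoly (n : ℕ) : ℝ[X] :=
  C (1 / (2 ^ n * (n.factorial : ℝ))) * derivative^[n] ((X ^ 2 - 1) ^ n)

/-- The `m`-th derivative of the Legendre polynomial `Pₙ`, as a function. -/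
def legendrePDeriv (n m : ℕ) (x : ℝ) : ℝ := (derivative^[m] (legendrePoly n)).eval x

theorem hasDerivAt_eval_iterate_derivative (p : ℝ[X]) (k : ℕ) (x : ℝ) :
    HasDerivAt (fun y => (derivative^[k] p).eval y) ((derivative^[k + 1] p).eval x) x := by
  rw [Function.iterate_succ_apply']
  exact (derivative^[k] p).hasDerivAt x

theorem iteratedDeriv_polynomial_eval (p : ℝ[X]) (k : ℕ) :
    iteratedDeriv k (fun x => p.eval x) = fun x => (derivative^[k] p).eval x := by
  induction k with
  | zero => simp
  | succ k ih =>
    rw [iteratedDeriv_succ, ih]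
    exact funext fun x => (hasDerivAt_eval_iterate_derivative p k x).deriv

theorem legendreP_eq_eval (n : ℕ) : legendreP n = fun x => (legendrePoly n).eval x := by
  funext x
  have hrod : (fun y : ℝ => (y ^ 2 - 1) ^ n) = fun y => ((X ^ 2 - 1) ^ n : ℝ[X]).eval y := by
    simp
  rw [legendreP, hrod, iteratedDeriv_polynomial_eval, legendrePoly, eval_C_mul]

theorem iteratedDeriv_legendreP (n m : ℕ) :
    iteratedDeriv m (legendreP n) = legendrePDeriv n m := by
  rw [legendreP_eq_eval, iteratedDeriv_polynomial_eval]
  rfl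

theorem legendreP_eq_legendrePDeriv_zero (n : ℕ) : legendreP n = legendrePDeriv n 0 := by
  rw [← iteratedDeriv_legendreP, iteratedDeriv_zero]

theorem hasDerivAt_legendrePDeriv (n m : ℕ) (x : ℝ) :
    HasDerivAt (legendrePDeriv n m) (legendrePDeriv n (m + 1) x) x :=
  hasDerivAt_eval_iterate_derivative _ m x

theorem continuous_legendrePDeriv (n m : ℕ) : Continuous (legendrePDeriv n m) :=
  (derivative^[m] (legendrePoly n)).continuous

theorem contDiff_legendrePDeriv (n m : ℕ) {k : WithTop ℕ∞} : ContDiff ℝ k (legendrePDeriv n m) :=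
  Polynomial.contDiff_aeval (derivative^[m] (legendrePoly n)) k

theorem gegenbauer_ode_derivSeq {f : ℕ → ℝ → ℝ} {s : Set ℝ} (hs : IsOpen s)
    (hf : ∀ m, ∀ x ∈ s, HasDerivAt (f m) (f (m + 1) x) x) {b N : ℝ}
    (h0 : ∀ x ∈ s, (x ^ 2 - 1) * f 2 x + b * x * f 1 x - N * f 0 x = 0) (m : ℕ) :
    ∀ x ∈ s, (x ^ 2 - 1) * f (m + 2) x + (b + 2 * m) * x * f (m + 1) x
      - (N - m * b - m * (m - 1)) * f m x = 0 := by
  induction m with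
  | zero => simpa using h0
  | succ k ih =>
    intro x hx
    have hd := ((((hasDerivAt_pow 2 x).sub_const 1).mul (hf (k + 2) x hx)).add
      (((hasDerivAt_id x).const_mul (b + 2 * (k : ℝ))).mul (hf (k + 1) x hx))).sub
      ((hf k x hx).const_mul (N - k * b - k * (k - 1)))
    have hz : HasDerivAt (fun y => (y ^ 2 - 1) * f (k + 2) y + (b + 2 * k) * y * f (k + 1) y
        - (N - k * b - k * (k - 1)) * f k y) 0 x :=
      (hasDerivAt_const x (0 : ℝ)).congr_of_eventuallyEq
        (eventually_of_mem (hs.mem_nhds hx) ih)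
    have heq := hd.unique hz
    simp only [id_eq, mul_one] at heq
    push_cast at heq ⊢
    linear_combination heq

theorem sq_sub_one_pow_ode (n : ℕ) (x : ℝ) :
    (x ^ 2 - 1) * (derivative^[2] ((X ^ 2 - 1) ^ n : ℝ[X])).eval x
      + (2 - 2 * n) * x * (derivative^[1] ((X ^ 2 - 1) ^ n : ℝ[X])).eval x
      - 2 * n * (derivative^[0] ((X ^ 2 - 1) ^ n : ℝ[X])).eval x = 0 := by
  have hfirst : (X ^ 2 - 1) * derivative ((X ^ 2 - 1) ^ n : ℝ[X])
      = 2 * (n : ℝ[X]) * X * (X ^ 2 - 1) ^ n := by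
    cases n with
    | zero => simp
    | succ n =>
      simp only [derivative_pow_succ, derivative_sub, derivative_one, map_add,
        map_natCast, map_one, Nat.cast_add, Nat.cast_one]
      norm_num
      ring
  have hsecond := congrArg (fun q : ℝ[X] => q.derivative.eval x) hfirst
  simp only [derivative_mul, derivative_sub, derivative_X_pow, derivative_one, eval_add, eval_mul,
    eval_sub, eval_pow, eval_X, eval_one, derivative_ofNat, derivative_natCast, derivative_X,
    eval_natCast, eval_ofNat, eval_zero, Nat.cast_ofNat] at hsecond
  simp only [Function.iterate_succ_apply, Function.iterate_zero_apply, eval_pow, eval_sub, eval_X,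
    eval_one]
  norm_num at hsecond
  linear_combination hsecond

theorem legendrePDeriv_ode (n m : ℕ) (x : ℝ) :
    (x ^ 2 - 1) * legendrePDeriv n (m + 2) x + 2 * (m + 1) * x * legendrePDeriv n (m + 1) x
      - (n * (n + 1) - m * (m + 1)) * legendrePDeriv n m x = 0 := by
  have key := gegenbauer_ode_derivSeq isOpen_univ
    (fun k y _ => hasDerivAt_eval_iterate_derivative ((X ^ 2 - 1) ^ n) k y)
    (fun y _ => sq_sub_one_pow_ode n y) (n + m) x (Set.mem_univ x)
  have hcoe : ∀ k, legendrePDeriv n k x = (1 / (2 ^ n * (n.factorial : ℝ))) *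
      (derivative^[n + k] ((X ^ 2 - 1) ^ n : ℝ[X])).eval x := fun k => by
    rw [legendrePDeriv, legendrePoly, iterate_derivative_C_mul, eval_C_mul, add_comm n k,
      Function.iterate_add_apply]
  rw [hcoe, hcoe, hcoe, ← add_assoc, ← add_assoc]
  push_cast at key
  linear_combination (1 / (2 ^ n * (n.factorial : ℝ))) * key

-- The Taylor expansion of `(x² - 1)ⁿ` at `1` is `yⁿ (y + 2)ⁿ` with `y = x - 1`.
theorem legendrePDeriv_one (n m : ℕ) :
    legendrePDeriv n m 1 =
      (n + m).factorial * ((X + C 2) ^ n : ℝ[X]).coeff m / (2 ^ n * n.factorial) := by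
  have htaylor : taylor 1 ((X ^ 2 - 1) ^ n : ℝ[X]) = (X + C 2) ^ n * X ^ n := by
    rw [taylor_pow, map_sub, taylor_X_pow, taylor_one, ← mul_pow]
    congr 1
    rw [show (C 2 : ℝ[X]) = 2 from rfl, map_one]
    ring
  rw [legendrePDeriv, legendrePoly, iterate_derivative_C_mul, eval_C_mul,
    ← Function.iterate_add_apply, add_comm m n, ← factorial_smul_hasseDeriv,
    LinearMap.smul_apply, eval_smul, ← taylor_coeff, htaylor, add_comm n m, coeff_mul_X_pow,
    nsmul_eq_mul]
  ring

theorem legendrePDeriv_zero_one (n : ℕ) : legendrePDeriv n 0 1 = 1 := by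
  rw [legendrePDeriv_one, coeff_X_add_C_pow]
  have : (n.factorial : ℝ) ≠ 0 := by positivity
  simp [field]

theorem legendrePDeriv_one_pos {n m : ℕ} (hm : m ≤ n) : 0 < legendrePDeriv n m 1 := by
  rw [legendrePDeriv_one, coeff_X_add_C_pow]
  have := Nat.choose_pos hm
  positivity

theorem legendrePDeriv_one_nonneg (n m : ℕ) : 0 ≤ legendrePDeriv n m 1 := by
  rw [legendrePDeriv_one, coeff_X_add_C_pow]
  positivity

theorem legendrePDeriv_one_le (n m : ℕ) {x : ℝ} (hx : 1 ≤ x) :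
    legendrePDeriv n m 1 ≤ legendrePDeriv n m x := by
  by_cases hm : (legendrePoly n).natDegree < m
  · simp [legendrePDeriv, iterate_derivative_eq_zero hm]
  · have hmono : MonotoneOn (legendrePDeriv n m) (Set.Ici 1) := by
      refine monotoneOn_of_deriv_nonneg (convex_Ici 1) (continuous_legendrePDeriv n m).continuousOn
        (fun y _ => (hasDerivAt_legendrePDeriv n m y).differentiableAt.differentiableWithinAt)
        fun y hy => ?_
      rw [(hasDerivAt_legendrePDeriv n m y).deriv]
      exact (legendrePDeriv_one_nonneg n (m + 1)).trans
        (legendrePDeriv_one_le n (m + 1) (interior_subset hy))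
    exact hmono Set.self_mem_Ici hx hx
termination_by (legendrePoly n).natDegree + 1 - m

theorem legendrePDeriv_pos {n m : ℕ} (hm : m ≤ n) {x : ℝ} (hx : 1 ≤ x) :
    0 < legendrePDeriv n m x :=
  (legendrePDeriv_one_pos hm).trans_le (legendrePDeriv_one_le n m hx)

end LegendrePolynomial

/-! ### Integrals over compact sets -/

theorem hasDerivAt_setIntegral_of_continuousOn {α : Type*} [TopologicalSpace α]
    [MeasurableSpace α] [OpensMeasurableSpace α] [T2Space α] {μ : Measure α}
    [IsFiniteMeasureOnCompacts μ] {K : Set α} (hK : IsCompact K) {U : Set ℝ} (hU : IsOpen U)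
    {F F' : ℝ → α → ℝ} (hF : ∀ x ∈ U, ContinuousOn (F x) K)
    (hF' : ContinuousOn (Function.uncurry F') (U ×ˢ K))
    (hd : ∀ x ∈ U, ∀ a ∈ K, HasDerivAt (fun y => F y a) (F' x a) x) {x₀ : ℝ} (hx₀ : x₀ ∈ U) :
    HasDerivAt (fun x => ∫ a in K, F x a ∂μ) (∫ a in K, F' x₀ a ∂μ) x₀ := by
  obtain ⟨ε, hε, hball⟩ := Metric.nhds_basis_closedBall.mem_iff.1 (hU.mem_nhds hx₀)
  obtain ⟨C, hC⟩ := ((isCompact_closedBall x₀ ε).prod hK).exists_bound_of_continuousOn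
    (hF'.mono (Set.prod_mono hball le_rfl))
  have hF'₀ : ContinuousOn (F' x₀) K :=
    hF'.comp (f := fun a => (x₀, a)) (by fun_prop) fun a ha => ⟨hx₀, ha⟩
  refine (hasDerivAt_integral_of_dominated_loc_of_deriv_le (s := Metric.ball x₀ ε)
    (bound := fun _ => C) (F' := F') (Metric.ball_mem_nhds _ hε) ?_
    ((hF x₀ hx₀).integrableOn_compact hK) (hF'₀.aestronglyMeasurable_of_isCompact hK
    hK.measurableSet) ?_ (integrableOn_const hK.measure_ne_top) ?_).2
  · filter_upwards [hU.mem_nhds hx₀] with x hx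
    exact (hF x hx).aestronglyMeasurable_of_isCompact hK hK.measurableSet
  · filter_upwards [ae_restrict_mem hK.measurableSet] with a ha x hx
    exact hC (x, a) ⟨Metric.ball_subset_closedBall hx, ha⟩
  · filter_upwards [ae_restrict_mem hK.measurableSet] with a ha x hx
    exact hd x (hball (Metric.ball_subset_closedBall hx)) a ha

theorem setIntegral_Icc_eq_sub_of_hasDerivAt {a b : ℝ} (hab : a ≤ b) {f f' : ℝ → ℝ}
    (hf : ∀ x ∈ Set.Icc a b, HasDerivAt f (f' x) x) (hf' : ContinuousOn f' (Set.Icc a b)) :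
    ∫ x in Set.Icc a b, f' x = f b - f a := by
  rw [integral_Icc_eq_integral_Ioc, ← intervalIntegral.integral_of_le hab]
  rw [← Set.uIcc_of_le hab] at hf hf'
  exact intervalIntegral.integral_eq_sub_of_hasDerivAt hf hf'.intervalIntegrable

theorem eqOn_const_of_hasDerivAt_zero {s : Set ℝ} (hs : IsOpen s) (hs' : IsPreconnected s)
    {f : ℝ → ℝ} (hf : ∀ x ∈ s, HasDerivAt f 0 x) {x y : ℝ} (hx : x ∈ s) (hy : y ∈ s) :
    f x = f y :=
  hs.is_const_of_deriv_eq_zero hs'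
    (fun z hz => (hf z hz).differentiableAt.differentiableWithinAt) (fun z hz => (hf z hz).deriv)
    hx hy

/-! ### Legendre functions of the second kind -/

/-- The moment `∫ g(t) (x - t)⁻ᵏ⁻¹ dt` over `[-1, 1]`; up to the factor `(-1)ᵏ k!` it is the `k`-th
derivative of the Cauchy transform of `g`. -/
def cauchyMoment (g : ℝ → ℝ) (k : ℕ) (x : ℝ) : ℝ :=
  ∫ t in Set.Icc (-1 : ℝ) 1, g t * ((x - t)⁻¹) ^ (k + 1)

theorem sub_ne_zero_of_mem_Icc {x t : ℝ} (hx : 1 < x) (ht : t ∈ Set.Icc (-1 : ℝ) 1) :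
    x - t ≠ 0 :=
  sub_ne_zero.2 (ht.2.trans_lt hx).ne'

theorem continuousOn_cauchyKernel {g : ℝ → ℝ} (hg : Continuous g) (k : ℕ) :
    ContinuousOn (fun p : ℝ × ℝ => g p.2 * ((p.1 - p.2)⁻¹) ^ (k + 1))
      (Set.Ioi 1 ×ˢ Set.Icc (-1) 1) :=
  (hg.comp continuous_snd).continuousOn.mul (ContinuousOn.pow (ContinuousOn.inv₀
    (by fun_prop) fun p hp => sub_ne_zero_of_mem_Icc hp.1 hp.2) _)

theorem continuousOn_cauchyKernel_right {g : ℝ → ℝ} (hg : Continuous g) (k : ℕ) {x : ℝ}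
    (hx : 1 < x) :
    ContinuousOn (fun t => g t * ((x - t)⁻¹) ^ (k + 1)) (Set.Icc (-1) 1) :=
  (continuousOn_cauchyKernel hg k).comp (f := fun t => (x, t)) (by fun_prop) fun _ ht => ⟨hx, ht⟩

theorem integrableOn_cauchyKernel {g : ℝ → ℝ} (hg : Continuous g) (k : ℕ) {x : ℝ} (hx : 1 < x) :
    IntegrableOn (fun t => g t * ((x - t)⁻¹) ^ (k + 1)) (Set.Icc (-1) 1) :=
  (continuousOn_cauchyKernel_right hg k hx).integrableOn_compact isCompact_Icc

theorem hasDerivAt_cauchyMoment {g : ℝ → ℝ} (hg : Continuous g) (k : ℕ) {x : ℝ} (hx : 1 < x) :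
    HasDerivAt (cauchyMoment g k) (-(k + 1) * cauchyMoment g (k + 1) x) x := by
  rw [cauchyMoment, ← integral_const_mul]
  refine hasDerivAt_setIntegral_of_continuousOn isCompact_Icc isOpen_Ioi
    (F := fun y t => g t * ((y - t)⁻¹) ^ (k + 1))
    (F' := fun y t => -(k + 1) * (g t * ((y - t)⁻¹) ^ (k + 1 + 1)))
    (fun y hy => continuousOn_cauchyKernel_right hg k hy)
    (continuousOn_const.mul (continuousOn_cauchyKernel hg (k + 1))) (fun y hy t ht => ?_) hx
  have hinv := ((hasDerivAt_id' y).sub_const t).fun_inv (sub_ne_zero_of_mem_Icc hy ht)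
  refine ((hinv.fun_pow (k + 1)).const_mul (g t)).congr_deriv ?_
  rw [Nat.add_sub_cancel, div_eq_mul_inv, ← inv_pow]
  push_cast
  ring

theorem tendsto_cauchyMoment_atTop {g : ℝ → ℝ} (hg : Continuous g) (k : ℕ) :
    Tendsto (cauchyMoment g k) atTop (𝓝 0) := by
  rw [← integral_zero ℝ ℝ (μ := volume.restrict (Set.Icc (-1) 1))]
  refine tendsto_integral_filter_of_dominated_convergence (fun t => ‖g t‖) ?_ ?_
    (hg.norm.integrableOn_Icc) (ae_of_all _ fun t => ?_)
  · filter_upwards [eventually_gt_atTop 1] with x hx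
    exact (integrableOn_cauchyKernel hg k hx).aestronglyMeasurable
  · filter_upwards [eventually_ge_atTop 2] with x hx
    filter_upwards [ae_restrict_mem measurableSet_Icc] with t ht
    have hxt : 1 ≤ x - t := by linarith [ht.2]
    rw [norm_mul, norm_pow, norm_inv, Real.norm_of_nonneg (zero_le_one.trans hxt)]
    exact mul_le_of_le_one_right (norm_nonneg _)
      (pow_le_one₀ (by positivity) (inv_le_one_of_one_le₀ hxt))
  · have hinv : Tendsto (fun x : ℝ => (x - t)⁻¹) atTop (𝓝 0) :=
      tendsto_inv_atTop_zero.comp (tendsto_atTop_add_const_right _ _ tendsto_id)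
    simpa using (hinv.pow (k + 1)).const_mul (g t)

theorem tendsto_sq_sub_one_mul_cauchyMoment {g : ℝ → ℝ} (hg : Continuous g) :
    Tendsto (fun x => (x ^ 2 - 1) * cauchyMoment g 0 x) (𝓝[>] 1) (𝓝 0) := by
  simp only [cauchyMoment, ← integral_const_mul]
  rw [← integral_zero ℝ ℝ (μ := volume.restrict (Set.Icc (-1) 1))]
  have hx2 : ∀ᶠ x : ℝ in 𝓝[>] 1, x < 2 := nhdsWithin_le_nhds (eventually_lt_nhds one_lt_two)
  refine tendsto_integral_filter_of_dominated_convergence (fun t => 3 * ‖g t‖) ?_ ?_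
    ((hg.norm.const_smul (3 : ℝ)).integrableOn_Icc) ?_
  · filter_upwards [self_mem_nhdsWithin] with x hx
    exact ((integrableOn_cauchyKernel hg 0 hx).const_mul _).aestronglyMeasurable
  · filter_upwards [self_mem_nhdsWithin, hx2] with x (hx : 1 < x) hx2
    filter_upwards [ae_restrict_mem measurableSet_Icc] with t ht
    have hxt : 0 < x - t := by linarith [ht.2]
    have hle : (x ^ 2 - 1) * (x - t)⁻¹ ≤ 3 := by
      rw [← div_eq_mul_inv, div_le_iff₀ hxt]
      nlinarith [ht.2]
    have h0 : 0 ≤ (x ^ 2 - 1) * (x - t)⁻¹ := mul_nonneg (by nlinarith) (by positivity)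
    rw [zero_add, pow_one, mul_left_comm, norm_mul, Real.norm_of_nonneg h0, mul_comm]
    gcongr
  · have hne : ∀ᵐ t : ℝ, t ≠ 1 := by simp [ae_iff]
    filter_upwards [ae_restrict_of_ae hne] with t ht
    have hc : ContinuousAt (fun x : ℝ => (x ^ 2 - 1) * (g t * ((x - t)⁻¹) ^ (0 + 1))) 1 := by
      have : (1 : ℝ) - t ≠ 0 := sub_ne_zero.2 ht.symm
      fun_prop (disch := assumption)
    simpa using hc.tendsto.mono_left nhdsWithin_le_nhds

theorem cauchyMoment_one {g g' : ℝ → ℝ} (hg : ∀ t, HasDerivAt g (g' t) t) (hg' : Continuous g')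
    {x : ℝ} (hx : 1 < x) :
    cauchyMoment g 1 x = g 1 * (x - 1)⁻¹ - g (-1) * (x + 1)⁻¹ - cauchyMoment g' 0 x := by
  have hgc : Continuous g := continuous_iff_continuousAt.2 fun t => (hg t).continuousAt
  have hftc := setIntegral_Icc_eq_sub_of_hasDerivAt (a := -1) (b := 1) (by norm_num)
    (f := fun t => g t * (x - t)⁻¹)
    (f' := fun t => g' t * ((x - t)⁻¹) ^ (0 + 1) + g t * ((x - t)⁻¹) ^ (1 + 1))
    (fun t ht => ((hg t).fun_mul (((hasDerivAt_id' t).const_sub x).fun_inv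
      (sub_ne_zero_of_mem_Icc hx ht))).congr_deriv (by rw [div_eq_mul_inv, ← inv_pow]; ring))
    ((continuousOn_cauchyKernel_right hg' 0 hx).add (continuousOn_cauchyKernel_right hgc 1 hx))
  rw [integral_add (integrableOn_cauchyKernel hg' 0 hx) (integrableOn_cauchyKernel hgc 1 hx),
    sub_neg_eq_add] at hftc
  simp only [cauchyMoment]
  linear_combination hftc

/-- The `m`-th derivative of the Legendre function `Qₙ` on `(1, ∞)`. -/
def legendreQDeriv (n m : ℕ) (x : ℝ) : ℝ :=
  (-1) ^ m * m.factorial / 2 * cauchyMoment (legendrePDeriv n 0) m x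

theorem legendreQ_eq_legendreQDeriv_zero (n : ℕ) : legendreQ n = legendreQDeriv n 0 := by
  funext x
  rw [legendreQ, legendreQDeriv, cauchyMoment, intervalIntegral.integral_of_le (by norm_num),
    ← integral_Icc_eq_integral_Ioc, legendreP_eq_legendrePDeriv_zero]
  simp [div_eq_mul_inv]

theorem hasDerivAt_legendreQDeriv (n m : ℕ) {x : ℝ} (hx : 1 < x) :
    HasDerivAt (legendreQDeriv n m) (legendreQDeriv n (m + 1) x) x := by
  refine ((hasDerivAt_cauchyMoment (continuous_legendrePDeriv n 0) m hx).const_mul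
    ((-1) ^ m * m.factorial / 2 : ℝ)).congr_deriv ?_
  rw [legendreQDeriv, Nat.factorial_succ]
  push_cast
  ring

theorem iteratedDeriv_legendreQ (n m : ℕ) {x : ℝ} (hx : 1 < x) :
    iteratedDeriv m (legendreQ n) x = legendreQDeriv n m x := by
  induction m generalizing x with
  | zero => rw [iteratedDeriv_zero, legendreQ_eq_legendreQDeriv_zero]
  | succ m ih =>
    have heq : iteratedDeriv m (legendreQ n) =ᶠ[𝓝 x] legendreQDeriv n m :=
      eventually_of_mem (Ioi_mem_nhds hx) fun y hy => ih hy
    rw [iteratedDeriv_succ, heq.deriv_eq, (hasDerivAt_legendreQDeriv n m hx).deriv]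

theorem tendsto_legendreQDeriv_atTop (n m : ℕ) : Tendsto (legendreQDeriv n m) atTop (𝓝 0) := by
  have h := (tendsto_cauchyMoment_atTop (continuous_legendrePDeriv n 0) m).const_mul
    ((-1) ^ m * m.factorial / 2 : ℝ)
  rwa [mul_zero] at h

-- Apply Legendre's operator in `x` to `(x - t)⁻¹`: it equals the same operator in `t`, so the
-- result is the `t`-derivative below, which vanishes at `t = ±1`.
theorem hasDerivAt_legendreP_mul_cauchyKernel (n : ℕ) {x t : ℝ} (hxt : x - t ≠ 0) :
    HasDerivAt
      (fun s => (s ^ 2 - 1) *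
        (legendrePDeriv n 0 s * ((x - s)⁻¹) ^ 2 - legendrePDeriv n 1 s * (x - s)⁻¹))
      (2 * (x ^ 2 - 1) * (legendrePDeriv n 0 t * ((x - t)⁻¹) ^ (2 + 1))
        - 2 * x * (legendrePDeriv n 0 t * ((x - t)⁻¹) ^ (1 + 1))
        - n * (n + 1) * (legendrePDeriv n 0 t * ((x - t)⁻¹) ^ (0 + 1))) t := by
  have hinv := ((hasDerivAt_id' t).const_sub x).fun_inv hxt
  refine (((hasDerivAt_pow 2 t).sub_const 1).fun_mul
    (((hasDerivAt_legendrePDeriv n 0 t).fun_mul (hinv.fun_pow 2)).fun_sub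
      ((hasDerivAt_legendrePDeriv n 1 t).fun_mul hinv))).congr_deriv ?_
  have hode := legendrePDeriv_ode n 0 t
  simp only [zero_add, Nat.reduceAdd, Nat.cast_zero, Nat.cast_ofNat, sub_zero, mul_one,
    Nat.add_one_sub_one, pow_one] at hode ⊢
  field_simp
  linear_combination (-(x - t) ^ 2) * hode

theorem legendreQDeriv_ode_zero (n : ℕ) {x : ℝ} (hx : 1 < x) :
    (x ^ 2 - 1) * legendreQDeriv n 2 x + 2 * x * legendreQDeriv n 1 x
      - n * (n + 1) * legendreQDeriv n 0 x = 0 := by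
  have hP := continuous_legendrePDeriv n 0
  have hint := fun k => integrableOn_cauchyKernel hP k hx
  have hcont := fun k => continuousOn_cauchyKernel_right hP k hx
  have hftc := setIntegral_Icc_eq_sub_of_hasDerivAt (by norm_num)
    (fun t ht => hasDerivAt_legendreP_mul_cauchyKernel n (sub_ne_zero_of_mem_Icc hx ht))
    (((continuousOn_const.mul (hcont 2)).sub (continuousOn_const.mul (hcont 1))).sub
      (continuousOn_const.mul (hcont 0)))
  rw [integral_sub (by exact ((hint 2).const_mul _).sub ((hint 1).const_mul _))
    ((hint 0).const_mul _), integral_sub ((hint 2).const_mul _) ((hint 1).const_mul _),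
    integral_const_mul, integral_const_mul, integral_const_mul] at hftc
  norm_num at hftc
  norm_num [legendreQDeriv, cauchyMoment, Nat.factorial]
  linear_combination hftc / 2

theorem legendreQDeriv_ode (n m : ℕ) {x : ℝ} (hx : 1 < x) :
    (x ^ 2 - 1) * legendreQDeriv n (m + 2) x + 2 * (m + 1) * x * legendreQDeriv n (m + 1) x
      - (n * (n + 1) - m * (m + 1)) * legendreQDeriv n m x = 0 := by
  have h := gegenbauer_ode_derivSeq isOpen_Ioi (fun k y hy => hasDerivAt_legendreQDeriv n k hy)
    (fun y hy => legendreQDeriv_ode_zero n hy) m x hx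
  linear_combination h

theorem tendsto_legendreWronskian_one (n : ℕ) :
    Tendsto (fun x => (x ^ 2 - 1) *
      (legendrePDeriv n 0 x * legendreQDeriv n 1 x - legendrePDeriv n 1 x * legendreQDeriv n 0 x))
      (𝓝[>] 1) (𝓝 (-1)) := by
  set p := legendrePDeriv n 0
  set p' := legendrePDeriv n 1
  have hp : Continuous p := continuous_legendrePDeriv n 0
  have hp' : Continuous p' := continuous_legendrePDeriv n 1
  have hp1 : p 1 = 1 := legendrePDeriv_zero_one n
  have hbdry : ContinuousAt (fun x => -(p x * ((x + 1) * p 1 - (x - 1) * p (-1))) / 2) 1 := by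
    fun_prop
  have hlim := (hbdry.tendsto.mono_left (nhdsWithin_le_nhds (s := Set.Ioi 1))).add
    ((((hp.tendsto 1).mono_left nhdsWithin_le_nhds).mul
      (tendsto_sq_sub_one_mul_cauchyMoment hp')).sub
    (((hp'.tendsto 1).mono_left nhdsWithin_le_nhds).mul
      (tendsto_sq_sub_one_mul_cauchyMoment hp)) |>.div_const 2)
  norm_num [hp1] at hlim
  refine hlim.congr' ?_
  filter_upwards [self_mem_nhdsWithin] with x (hx : 1 < x)
  have hx1 : x - 1 ≠ 0 := by linarith
  have hx2 : x + 1 ≠ 0 := by linarith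
  norm_num [legendreQDeriv]
  rw [cauchyMoment_one (hasDerivAt_legendrePDeriv n 0) hp' hx]
  simp only [← show p = legendrePDeriv n 0 from rfl, ← show p' = legendrePDeriv n (0 + 1) from rfl,
    hp1]
  field_simp
  ring

theorem legendreWronskian_zero (n : ℕ) {x : ℝ} (hx : 1 < x) :
    (x ^ 2 - 1) * (legendrePDeriv n 0 x * legendreQDeriv n 1 x
      - legendrePDeriv n 1 x * legendreQDeriv n 0 x) = -1 := by
  have hderiv : ∀ y ∈ Set.Ioi (1 : ℝ), HasDerivAt (fun x => (x ^ 2 - 1) *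
      (legendrePDeriv n 0 x * legendreQDeriv n 1 x
        - legendrePDeriv n 1 x * legendreQDeriv n 0 x)) 0 y := fun y hy => by
    refine (((hasDerivAt_pow 2 y).sub_const 1).fun_mul (((hasDerivAt_legendrePDeriv n 0 y).fun_mul
      (hasDerivAt_legendreQDeriv n 1 hy)).fun_sub ((hasDerivAt_legendrePDeriv n 1 y).fun_mul
      (hasDerivAt_legendreQDeriv n 0 hy)))).congr_deriv ?_
    have hP := legendrePDeriv_ode n 0 y
    have hQ := legendreQDeriv_ode n 0 hy
    norm_num at hP hQ ⊢
    linear_combination -legendreQDeriv n 0 y * hP + legendrePDeriv n 0 y * hQ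
  refine tendsto_nhds_unique (tendsto_const_nhds.congr' ?_) (tendsto_legendreWronskian_one n)
  filter_upwards [self_mem_nhdsWithin] with y hy
  exact eqOn_const_of_hasDerivAt_zero isOpen_Ioi isPreconnected_Ioi hderiv hx hy

theorem legendreWronskian {n m : ℕ} (hm : m ≤ n) {x : ℝ} (hx : 1 < x) :
    (x ^ 2 - 1) ^ (m + 1) * (legendrePDeriv n m x * legendreQDeriv n (m + 1) x
      - legendrePDeriv n (m + 1) x * legendreQDeriv n m x)
      = (-1) ^ (m + 1) * ((n + m).factorial / (n - m).factorial) := by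
  induction m with
  | zero =>
    have hn : (n.factorial : ℝ) ≠ 0 := by positivity
    simpa [hn] using legendreWronskian_zero n hx
  | succ k ih =>
    have hP := legendrePDeriv_ode n k x
    have hQ := legendreQDeriv_ode n k hx
    have hstep := ih (by lia)
    have hfac : ((n + (k + 1)).factorial / (n - (k + 1)).factorial : ℝ)
        = (n * (n + 1) - k * (k + 1)) * ((n + k).factorial / (n - k).factorial) := by
      obtain ⟨j, rfl⟩ := Nat.exists_eq_add_of_le hm
      rw [show k + 1 + j - k = j + 1 by lia, Nat.add_sub_cancel_left, ← add_assoc (k + 1 + j),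
        Nat.factorial_succ, Nat.factorial_succ]
      have := Nat.factorial_pos j
      push_cast
      field_simp
      ring
    rw [hfac, pow_succ (-1 : ℝ), pow_succ (x ^ 2 - 1)]
    linear_combination (x ^ 2 - 1) ^ (k + 1) *
      (legendrePDeriv n (k + 1) x * hQ - legendreQDeriv n (k + 1) x * hP)
      - (n * (n + 1) - k * (k + 1)) * hstep

/-! ### The distance kernel in prolate spheroidal coordinates -/

/-- The squared distance, in units of `a²`, between the points with prolate spheroidal coordinates
`(cosh e, cos θ, t)` and `(cosh η, cos ν, φ)`. -/
def sqDist (η ν φ e θ t : ℝ) : ℝ :=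
  (sinh e * sin θ * cos (t - φ) - sinh η * sin ν) ^ 2 + (sinh e * sin θ * sin (t - φ)) ^ 2
    + (cosh e * cos θ - cosh η * cos ν) ^ 2

/-- The versed sine of the angle between the unit vectors with spherical coordinates `(ν, φ)` and
`(θ, t)`. -/
def centralVersin (ν φ θ t : ℝ) : ℝ := 1 - sin ν * sin θ * cos (t - φ) - cos ν * cos θ

/-- The partial derivative of `sqDist` in the radial variable `e`. -/
def sqDistE (η ν φ e θ t : ℝ) : ℝ :=
  2 * sinh e * cosh e - 2 * cosh e * sin θ * (sinh η * sin ν * cos (t - φ))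
    - 2 * (cosh η * cos ν) * sinh e * cos θ

/-- The second partial derivative of `sqDist` in the radial variable `e`. -/
def sqDistEE (η ν φ e θ t : ℝ) : ℝ :=
  2 * (cosh e ^ 2 + sinh e ^ 2) - 2 * sinh e * sin θ * (sinh η * sin ν * cos (t - φ))
    - 2 * (cosh η * cos ν) * cosh e * cos θ

/-- The partial derivative of `sqDist` in the polar angle `θ`. -/
def sqDistTheta (η ν φ e θ t : ℝ) : ℝ :=
  -(2 * sin θ * cos θ) - 2 * sinh e * cos θ * (sinh η * sin ν * cos (t - φ))
    + 2 * (cosh η * cos ν) * cosh e * sin θ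

/-- The second partial derivative of `sqDist` in the polar angle `θ`. -/
def sqDistThetaTheta (η ν φ e θ t : ℝ) : ℝ :=
  -(2 * (cos θ ^ 2 - sin θ ^ 2)) + 2 * sinh e * sin θ * (sinh η * sin ν * cos (t - φ))
    + 2 * (cosh η * cos ν) * cosh e * cos θ

/-- The partial derivative of `sqDist` in the azimuth `t`. -/
def sqDistT (η ν φ e θ t : ℝ) : ℝ := 2 * sinh e * sin θ * (sinh η * sin ν * sin (t - φ))

/-- The second partial derivative of `sqDist` in the azimuth `t`. -/
def sqDistTT (η ν φ e θ t : ℝ) : ℝ := 2 * sinh e * sin θ * (sinh η * sin ν * cos (t - φ))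

section SqDist

variable (η ν φ e θ t : ℝ)

theorem sqDist_eq_expansion :
    sqDist η ν φ e θ t = sinh η ^ 2 + cos ν ^ 2 + sinh e ^ 2 + cos θ ^ 2
      - 2 * sinh e * sin θ * (sinh η * sin ν * cos (t - φ))
      - 2 * (cosh η * cos ν) * cosh e * cos θ := by
  rw [sqDist]
  linear_combination (sinh e * sin θ) ^ 2 * sin_sq_add_cos_sq (t - φ)
    + sinh e ^ 2 * sin_sq_add_cos_sq θ + sinh η ^ 2 * sin_sq_add_cos_sq ν
    + cos θ ^ 2 * cosh_sq e + cos ν ^ 2 * cosh_sq η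

theorem hasDerivAt_sqDist_e :
    HasDerivAt (fun x => sqDist η ν φ x θ t) (sqDistE η ν φ e θ t) e := by
  simp only [sqDist_eq_expansion]
  refine ((((((hasDerivAt_sinh e).fun_pow 2).const_add _).add_const _).sub
    ((((hasDerivAt_sinh e).const_mul 2).mul_const _).mul_const _)).sub
    (((hasDerivAt_cosh e).const_mul _).mul_const _)).congr_deriv ?_
  rw [sqDistE]
  ring

theorem hasDerivAt_sqDistE :
    HasDerivAt (fun x => sqDistE η ν φ x θ t) (sqDistEE η ν φ e θ t) e := by
  refine (((((hasDerivAt_sinh e).const_mul 2).mul (hasDerivAt_cosh e)).sub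
    ((((hasDerivAt_cosh e).const_mul 2).mul_const _).mul_const _)).sub
    (((hasDerivAt_sinh e).const_mul _).mul_const _)).congr_deriv ?_
  rw [sqDistEE]
  ring

theorem hasDerivAt_sqDist_theta :
    HasDerivAt (fun x => sqDist η ν φ e x t) (sqDistTheta η ν φ e θ t) θ := by
  simp only [sqDist_eq_expansion]
  refine (((((hasDerivAt_cos θ).fun_pow 2).const_add _).sub
    (((hasDerivAt_sin θ).const_mul _).mul_const _)).sub
    ((hasDerivAt_cos θ).const_mul _)).congr_deriv ?_
  rw [sqDistTheta]
  ring

theorem hasDerivAt_sqDistTheta :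
    HasDerivAt (fun x => sqDistTheta η ν φ e x t) (sqDistThetaTheta η ν φ e θ t) θ := by
  refine (((((hasDerivAt_sin θ).const_mul 2).mul (hasDerivAt_cos θ)).neg.sub
    (((hasDerivAt_cos θ).const_mul _).mul_const _)).add
    ((hasDerivAt_sin θ).const_mul _)).congr_deriv ?_
  rw [sqDistThetaTheta]
  ring

theorem hasDerivAt_sqDist_t :
    HasDerivAt (fun x => sqDist η ν φ e θ x) (sqDistT η ν φ e θ t) t := by
  simp only [sqDist_eq_expansion]
  refine ((((((hasDerivAt_id' t).sub_const φ).cos.const_mul _).const_mul _).const_sub _).sub_const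
    _).congr_deriv ?_
  rw [sqDistT]
  ring

theorem hasDerivAt_sqDistT :
    HasDerivAt (fun x => sqDistT η ν φ e θ x) (sqDistTT η ν φ e θ t) t := by
  refine ((((hasDerivAt_id' t).sub_const φ).sin.const_mul _).const_mul _).congr_deriv ?_
  rw [sqDistTT]
  ring

theorem metric_factor_eq :
    (cosh e * sin θ) ^ 2 + (sinh e * cos θ) ^ 2 = sinh e ^ 2 + sin θ ^ 2 := by
  linear_combination sin θ ^ 2 * cosh_sq e + sinh e ^ 2 * sin_sq_add_cos_sq θ

-- This is `|∇D|² = 4 D`, cleared of denominators.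
theorem sqDist_eikonal :
    (sinh e * sin θ) ^ 2 * (sqDistE η ν φ e θ t ^ 2 + sqDistTheta η ν φ e θ t ^ 2)
      + (sinh e ^ 2 + sin θ ^ 2) * sqDistT η ν φ e θ t ^ 2
      = 4 * (sinh e ^ 2 + sin θ ^ 2) * (sinh e * sin θ) ^ 2 * sqDist η ν φ e θ t := by
  obtain ⟨w, hw⟩ : ∃ w, w = sinh e * sin θ - sinh η * sin ν * cos (t - φ) := ⟨_, rfl⟩
  obtain ⟨z, hz⟩ : ∃ z, z = cosh e * cos θ - cosh η * cos ν := ⟨_, rfl⟩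
  have hE : sqDistE η ν φ e θ t = 2 * (cosh e * sin θ * w + sinh e * cos θ * z) := by
    rw [sqDistE, hw, hz]
    linear_combination (-2 * sinh e * cosh e) * sin_sq_add_cos_sq θ
  have hTheta : sqDistTheta η ν φ e θ t = 2 * (sinh e * cos θ * w - cosh e * sin θ * z) := by
    rw [sqDistTheta, hw, hz]
    linear_combination (2 * sin θ * cos θ) * cosh_sq e
  have hD : sqDist η ν φ e θ t = w ^ 2 + (sinh η * sin ν * sin (t - φ)) ^ 2 + z ^ 2 := by
    rw [sqDist, hw, hz]
    linear_combination ((sinh e * sin θ) ^ 2 - (sinh η * sin ν) ^ 2) * sin_sq_add_cos_sq (t - φ)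
  rw [hE, hTheta, hD, sqDistT]
  linear_combination 4 * (sinh e * sin θ) ^ 2 * (w ^ 2 + z ^ 2) * metric_factor_eq e θ

-- This is `ΔD = 6`, cleared of denominators.
theorem sqDist_laplacian :
    sin θ ^ 2 * (sinh e * (sinh e * sqDistEE η ν φ e θ t + cosh e * sqDistE η ν φ e θ t))
      + sinh e ^ 2 * (sin θ *
        (sin θ * sqDistThetaTheta η ν φ e θ t + cos θ * sqDistTheta η ν φ e θ t))
      + (sinh e ^ 2 + sin θ ^ 2) * sqDistTT η ν φ e θ t
      = 6 * (sinh e ^ 2 + sin θ ^ 2) * (sinh e * sin θ) ^ 2 := by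
  rw [sqDistEE, sqDistE, sqDistThetaTheta, sqDistTheta, sqDistTT]
  linear_combination
    (4 * (sinh e * sin θ) ^ 2 - 2 * sin θ ^ 3 * sinh e * (sinh η * sin ν * cos (t - φ))) * cosh_sq e
    - (4 * (sinh e * sin θ) ^ 2 + 2 * sin θ * sinh e ^ 3 * (sinh η * sin ν * cos (t - φ)))
      * sin_sq_add_cos_sq θ

theorem two_mul_centralVersin :
    2 * centralVersin ν φ θ t = (sin θ * cos (t - φ) - sin ν) ^ 2 + (sin θ * sin (t - φ)) ^ 2
      + (cos θ - cos ν) ^ 2 := by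
  rw [centralVersin]
  linear_combination -sin_sq_add_cos_sq ν - sin_sq_add_cos_sq θ
    - sin θ ^ 2 * sin_sq_add_cos_sq (t - φ)

theorem centralVersin_nonneg : 0 ≤ centralVersin ν φ θ t := by
  have := two_mul_centralVersin ν φ θ t
  nlinarith only [this, sq_nonneg (sin θ * cos (t - φ) - sin ν), sq_nonneg (sin θ * sin (t - φ)),
    sq_nonneg (cos θ - cos ν)]

theorem sqDist_eq_centralVersin :
    sqDist η ν φ e θ t = 2 * sinh η * sinh e * centralVersin ν φ θ t + (cosh η - cosh e) ^ 2
      + (cos θ - cos ν) ^ 2 + 2 * (cosh (η - e) - 1) * (1 - cos θ * cos ν) := by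
  rw [sqDist_eq_expansion, centralVersin, cosh_sub]
  linear_combination -cosh_sq η - cosh_sq e

theorem sqDist_neg : sqDist η ν φ (-e) θ t = sqDist η ν φ e (-θ) t := by
  simp only [sqDist, sinh_neg, cosh_neg, sin_neg, cos_neg, neg_mul, mul_neg]

end SqDist

theorem cos_mul_cos_le_one (x y : ℝ) : cos x * cos y ≤ 1 :=
  (le_abs_self _).trans (by
    rw [abs_mul]
    exact mul_le_one₀ (abs_cos_le_one x) (abs_nonneg _) (abs_cos_le_one y))

theorem sqDist_ge (η ν φ e θ t : ℝ) :
    2 * sinh η * sinh e * centralVersin ν φ θ t + (cosh η - cosh e) ^ 2 ≤ sqDist η ν φ e θ t := by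
  rw [sqDist_eq_centralVersin, add_assoc (_ + _ : ℝ)]
  exact le_add_of_nonneg_right (add_nonneg (sq_nonneg _) (mul_nonneg
    (mul_nonneg zero_le_two (sub_nonneg.2 (one_le_cosh _)))
    (sub_nonneg.2 (cos_mul_cos_le_one θ ν))))

theorem sqDist_pos {η e : ℝ} (he : |e| < η) (ν φ θ t : ℝ) : 0 < sqDist η ν φ e θ t := by
  have hη : 0 ≤ η := (abs_nonneg e).trans he.le
  wlog he0 : 0 ≤ e generalizing e θ
  · rw [← neg_neg e, sqDist_neg]
    exact this (by rwa [abs_neg]) (-θ) (by linarith)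
  have hcosh : cosh e < cosh η := cosh_lt_cosh.2 (he.trans_eq (abs_of_nonneg hη).symm)
  refine lt_of_lt_of_le ?_ (sqDist_ge η ν φ e θ t)
  exact add_pos_of_nonneg_of_pos (mul_nonneg (mul_nonneg (mul_nonneg zero_le_two
    (sinh_nonneg_iff.2 hη)) (sinh_nonneg_iff.2 he0)) (centralVersin_nonneg ν φ θ t))
    (pow_pos (sub_pos.2 hcosh) 2)

section InvSqrt

/-- The derivative of `1 / √D` along a variable in which `D` has derivative `D'`. -/
def invSqrtDeriv (D D' : ℝ) : ℝ := -(1 / 2) * (√D)⁻¹ ^ 3 * D'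

/-- The second derivative of `1 / √D` along a variable in which `D` has derivatives `D'`, `D''`. -/
def invSqrtDeriv₂ (D D' D'' : ℝ) : ℝ := 3 / 4 * (√D)⁻¹ ^ 5 * D' ^ 2 - 1 / 2 * (√D)⁻¹ ^ 3 * D''

theorem hasDerivAt_invSqrt {D : ℝ → ℝ} {D' x : ℝ} (h : HasDerivAt D D' x) (hD : 0 < D x) :
    HasDerivAt (fun x => (√(D x))⁻¹) (invSqrtDeriv (D x) D') x := by
  have hs : √(D x) ≠ 0 := (sqrt_pos.2 hD).ne'
  refine ((h.sqrt hD.ne').inv hs).congr_deriv ?_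
  rw [invSqrtDeriv]
  field_simp

theorem hasDerivAt_invSqrtDeriv {D D' : ℝ → ℝ} {D'' x : ℝ} (h : HasDerivAt D (D' x) x)
    (h' : HasDerivAt D' D'' x) (hD : 0 < D x) :
    HasDerivAt (fun x => invSqrtDeriv (D x) (D' x)) (invSqrtDeriv₂ (D x) (D' x) D'') x := by
  refine ((((hasDerivAt_invSqrt h hD).fun_pow 3).const_mul (-(1 / 2))).mul h').congr_deriv ?_
  rw [invSqrtDeriv, invSqrtDeriv₂]
  push_cast
  ring

variable {α : Type*} [TopologicalSpace α] {s : Set α} {D D' D'' : α → ℝ}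

theorem continuousOn_invSqrt (hD : ContinuousOn D s) (hpos : ∀ a ∈ s, 0 < D a) :
    ContinuousOn (fun a => (√(D a))⁻¹) s :=
  hD.sqrt.inv₀ fun a ha => (sqrt_pos.2 (hpos a ha)).ne'

theorem continuousOn_invSqrtDeriv (hD : ContinuousOn D s) (hD' : ContinuousOn D' s)
    (hpos : ∀ a ∈ s, 0 < D a) : ContinuousOn (fun a => invSqrtDeriv (D a) (D' a)) s :=
  (continuousOn_const.mul ((continuousOn_invSqrt hD hpos).pow 3)).mul hD'

theorem continuousOn_invSqrtDeriv₂ (hD : ContinuousOn D s) (hD' : ContinuousOn D' s)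
    (hD'' : ContinuousOn D'' s) (hpos : ∀ a ∈ s, 0 < D a) :
    ContinuousOn (fun a => invSqrtDeriv₂ (D a) (D' a) (D'' a)) s :=
  ((continuousOn_const.mul ((continuousOn_invSqrt hD hpos).pow 5)).mul (hD'.pow 2)).sub
    ((continuousOn_const.mul ((continuousOn_invSqrt hD hpos).pow 3)).mul hD'')

end InvSqrt

theorem invSqrt_sqDist_laplacian {η ν φ e θ t : ℝ} (hD : 0 < sqDist η ν φ e θ t) :
    sin θ ^ 2 * (sinh e *
        (sinh e * invSqrtDeriv₂ (sqDist η ν φ e θ t) (sqDistE η ν φ e θ t) (sqDistEE η ν φ e θ t)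
          + cosh e * invSqrtDeriv (sqDist η ν φ e θ t) (sqDistE η ν φ e θ t)))
      + sinh e ^ 2 * (sin θ *
        (sin θ * invSqrtDeriv₂ (sqDist η ν φ e θ t) (sqDistTheta η ν φ e θ t)
            (sqDistThetaTheta η ν φ e θ t)
          + cos θ * invSqrtDeriv (sqDist η ν φ e θ t) (sqDistTheta η ν φ e θ t)))
      + (sinh e ^ 2 + sin θ ^ 2) *
        invSqrtDeriv₂ (sqDist η ν φ e θ t) (sqDistT η ν φ e θ t) (sqDistTT η ν φ e θ t) = 0 := by
  have hr : (√(sqDist η ν φ e θ t))⁻¹ ^ 3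
      = (√(sqDist η ν φ e θ t))⁻¹ ^ 5 * sqDist η ν φ e θ t := by
    have hs : √(sqDist η ν φ e θ t) ≠ 0 := (sqrt_pos.2 hD).ne'
    nth_rewrite 3 [← sq_sqrt hD.le]
    field_simp
  simp only [invSqrtDeriv, invSqrtDeriv₂, hr]
  linear_combination
    3 / 4 * (√(sqDist η ν φ e θ t))⁻¹ ^ 5 * sqDist_eikonal η ν φ e θ t
    - 1 / 2 * (√(sqDist η ν φ e θ t))⁻¹ ^ 5 * sqDist η ν φ e θ t * sqDist_laplacian η ν φ e θ t

section Continuity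

variable {α : Type*} [TopologicalSpace α] {η ν φ e θ t : α → ℝ} (hη : Continuous η)
  (hν : Continuous ν) (hφ : Continuous φ) (he : Continuous e) (hθ : Continuous θ)
  (ht : Continuous t)
include hη hν hφ he hθ ht

@[fun_prop]
theorem continuous_sqDist :
    Continuous fun a => sqDist (η a) (ν a) (φ a) (e a) (θ a) (t a) := by
  unfold sqDist
  fun_prop

@[fun_prop]
theorem continuous_sqDistE :
    Continuous fun a => sqDistE (η a) (ν a) (φ a) (e a) (θ a) (t a) := by
  unfold sqDistE
  fun_prop

@[fun_prop]
theorem continuous_sqDistEE :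
    Continuous fun a => sqDistEE (η a) (ν a) (φ a) (e a) (θ a) (t a) := by
  unfold sqDistEE
  fun_prop

@[fun_prop]
theorem continuous_sqDistTheta :
    Continuous fun a => sqDistTheta (η a) (ν a) (φ a) (e a) (θ a) (t a) := by
  unfold sqDistTheta
  fun_prop

@[fun_prop]
theorem continuous_sqDistThetaTheta :
    Continuous fun a => sqDistThetaTheta (η a) (ν a) (φ a) (e a) (θ a) (t a) := by
  unfold sqDistThetaTheta
  fun_prop

@[fun_prop]
theorem continuous_sqDistTT :
    Continuous fun a => sqDistTT (η a) (ν a) (φ a) (e a) (θ a) (t a) := by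
  unfold sqDistTT
  fun_prop

end Continuity

/-! ### Separation of variables -/

/-- The parameter domain `[0, π] × [0, 2π]` of the polar angle and the azimuth. -/
def angularBox : Set (ℝ × ℝ) := Set.Icc 0 π ×ˢ Set.Icc 0 (2 * π)

theorem isCompact_angularBox : IsCompact angularBox := isCompact_Icc.prod isCompact_Icc

theorem restrict_angularBox : (volume : Measure (ℝ × ℝ)).restrict angularBox
    = (volume.restrict (Set.Icc 0 π)).prod (volume.restrict (Set.Icc 0 (2 * π))) := by
  rw [Measure.prod_restrict]
  rfl

theorem setIntegral_angularBox_eq_zero_of_polar {f : ℝ × ℝ → ℝ} (hf : Continuous f)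
    (h : ∀ t, ∫ θ in Set.Icc 0 π, f (θ, t) = 0) : ∫ p in angularBox, f p = 0 := by
  have hint : IntegrableOn f angularBox :=
    hf.continuousOn.integrableOn_compact isCompact_angularBox
  rw [IntegrableOn, restrict_angularBox] at hint
  rw [restrict_angularBox, integral_prod_symm _ hint]
  simp only [h, integral_zero]

theorem setIntegral_angularBox_eq_zero_of_azimuth {f : ℝ × ℝ → ℝ} (hf : Continuous f)
    (h : ∀ θ ∈ Set.Ioo 0 π, ∫ t in Set.Icc 0 (2 * π), f (θ, t) = 0) :
    ∫ p in angularBox, f p = 0 := by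
  have hint : IntegrableOn f angularBox :=
    hf.continuousOn.integrableOn_compact isCompact_angularBox
  rw [IntegrableOn, restrict_angularBox] at hint
  rw [restrict_angularBox, integral_prod _ hint, integral_Icc_eq_integral_Ioo]
  exact setIntegral_eq_zero_of_forall_eq_zero h

theorem setIntegral_lagrange_identity {a b : ℝ} (hab : a ≤ b) {u u' v v' F F' H H' : ℝ → ℝ}
    (hu : ∀ x, HasDerivAt u (u' x) x) (hv : ∀ x, HasDerivAt v (v' x) x)
    (hF : ∀ x, HasDerivAt F (F' x) x) (hH : ∀ x, HasDerivAt H (H' x) x)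
    (hflux : ∀ x, F x * v' x = u' x * H x) (hF' : Continuous F') (hH' : Continuous H') :
    ∫ x in Set.Icc a b, (F' x * v x - u x * H' x)
      = (F b * v b - u b * H b) - (F a * v a - u a * H a) := by
  have hcont {f f' : ℝ → ℝ} (hf : ∀ x, HasDerivAt f (f' x) x) : Continuous f :=
    continuous_iff_continuousAt.2 fun x => (hf x).continuousAt
  refine setIntegral_Icc_eq_sub_of_hasDerivAt (f := fun x => F x * v x - u x * H x) hab
    (fun x _ => (((hF x).mul (hv x)).sub ((hu x).mul (hH x))).congr_deriv ?_)
    ((hF'.mul (hcont hv)).sub ((hcont hu).mul hH')).continuousOn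
  linear_combination hflux x

theorem contDiff_deriv_of_two {f : ℝ → ℝ} (hf : ContDiff ℝ 2 f) : ContDiff ℝ 1 (deriv f) :=
  ContDiff.deriv' (by rwa [one_add_one_eq_two])

theorem periodic_deriv {f : ℝ → ℝ} {c : ℝ} (hf : Function.Periodic f c) :
    Function.Periodic (deriv f) c := fun x => by
  rw [← deriv_comp_add_const, hf.funext]

/-- A product `S(θ) T(t)` whose factors solve the angular equations obtained by separating the
Laplace equation in prolate spheroidal coordinates; `ℓ` and `μ` are the separation constants. -/
structure IsAngularMode (ℓ μ : ℝ) (S T : ℝ → ℝ) : Prop where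
  polar_contDiff : ContDiff ℝ 2 S
  polar_periodic : Function.Periodic S (2 * π)
  polar_eq : ∀ θ, sin θ * deriv (fun x => sin x * deriv S x) θ = (μ - ℓ * sin θ ^ 2) * S θ
  azimuth_contDiff : ContDiff ℝ 2 T
  azimuth_periodic : Function.Periodic T (2 * π)
  azimuth_eq : ∀ t, deriv (deriv T) t = -μ * T t

/-- A solution of the radial equation belonging to the separation constants `ℓ` and `μ`, in the
variable `e` for which the spheroidal radius is `cosh e`. -/
structure IsRadialSolution (ℓ μ : ℝ) (P : ℝ → ℝ) : Prop where
  contDiff : ContDiff ℝ 2 P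
  radial_eq : ∀ e, sinh e * deriv (fun x => sinh x * deriv P x) e = (ℓ * sinh e ^ 2 + μ) * P e

/-- The density `S(θ) T(t)`, multiplied by the `sin θ` of the surface element. -/
def angularDensity (S T : ℝ → ℝ) (p : ℝ × ℝ) : ℝ := sin p.1 * S p.1 * T p.2

theorem continuous_angularDensity {S T : ℝ → ℝ} (hS : Continuous S) (hT : Continuous T) :
    Continuous (angularDensity S T) := by
  unfold angularDensity
  fun_prop

namespace IsAngularMode

variable {ℓ μ : ℝ} {S T : ℝ → ℝ} (hST : IsAngularMode ℓ μ S T)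
include hST

theorem continuous_polar : Continuous S := hST.polar_contDiff.continuous

theorem continuous_azimuth : Continuous T := hST.azimuth_contDiff.continuous

theorem contDiff_polarFlux : ContDiff ℝ 1 fun x => sin x * deriv S x :=
  contDiff_sin.mul (contDiff_deriv_of_two hST.polar_contDiff)

theorem setIntegral_polar {u u' F' : ℝ → ℝ} (hu : ∀ x, HasDerivAt u (u' x) x)
    (hF : ∀ x, HasDerivAt (fun x => sin x * u' x) (F' x) x) (hF' : Continuous F') :
    ∫ x in Set.Icc 0 π, (F' x * S x - u x * deriv (fun x => sin x * deriv S x) x) = 0 := by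
  rw [setIntegral_lagrange_identity pi_pos.le hu
    (fun x => (hST.polar_contDiff.differentiable (by norm_num) x).hasDerivAt) hF
    (fun x => (hST.contDiff_polarFlux.differentiable (by norm_num) x).hasDerivAt)
    (fun x => by ring) hF' (hST.contDiff_polarFlux.continuous_deriv le_rfl)]
  simp

theorem setIntegral_azimuth {u u' u'' : ℝ → ℝ} (hu : ∀ x, HasDerivAt u (u' x) x)
    (hu' : ∀ x, HasDerivAt u' (u'' x) x) (hu'' : Continuous u'')
    (hper : Function.Periodic u (2 * π)) (hper' : Function.Periodic u' (2 * π)) :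
    ∫ x in Set.Icc 0 (2 * π), (u'' x * T x + μ * (u x * T x)) = 0 := by
  have hT' : ContDiff ℝ 1 (deriv T) := contDiff_deriv_of_two hST.azimuth_contDiff
  have hperT' : Function.Periodic (deriv T) (2 * π) := periodic_deriv hST.azimuth_periodic
  have := setIntegral_lagrange_identity two_pi_pos.le hu
    (fun x => (hST.azimuth_contDiff.differentiable (by norm_num) x).hasDerivAt) hu'
    (fun x => (hT'.differentiable (by norm_num) x).hasDerivAt)
    (fun x => rfl) hu'' (hT'.continuous_deriv le_rfl)
  rw [hper.eq, hper'.eq, hST.azimuth_periodic.eq, hperT'.eq, sub_self] at this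
  simpa only [hST.azimuth_eq, neg_mul, mul_neg, sub_neg_eq_add, mul_left_comm _ μ] using this

end IsAngularMode

namespace IsAngularMode

variable {ℓ μ : ℝ} {S T : ℝ → ℝ}

theorem setIntegral_eq_of_separated (hST : IsAngularMode ℓ μ S T) (h : ℝ)
    {L G Gθ N Gt Gtt : ℝ → ℝ → ℝ} (hL : Continuous (Function.uncurry L))
    (hG : Continuous (Function.uncurry G)) (hN : Continuous (Function.uncurry N))
    (hGtt : Continuous (Function.uncurry Gtt))
    (hdG : ∀ θ t, HasDerivAt (fun x => G x t) (Gθ θ t) θ)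
    (hdGθ : ∀ θ t, HasDerivAt (fun x => sin x * Gθ x t) (N θ t) θ)
    (hdG' : ∀ θ t, HasDerivAt (G θ) (Gt θ t) t) (hdGt : ∀ θ t, HasDerivAt (Gt θ) (Gtt θ t) t)
    (hper : ∀ θ, Function.Periodic (G θ) (2 * π))
    (hper' : ∀ θ, Function.Periodic (Gt θ) (2 * π))
    (heq : ∀ θ t, sin θ ^ 2 * L θ t + h * (sin θ * N θ t) + (h + sin θ ^ 2) * Gtt θ t = 0) :
    ∫ p in angularBox, angularDensity S T p * L p.1 p.2
      = (ℓ * h + μ) * ∫ p in angularBox, angularDensity S T p * G p.1 p.2 := by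
  have hS := hST.continuous_polar
  have hT := hST.continuous_azimuth
  have hd := continuous_angularDensity hS hT
  have hV := hST.contDiff_polarFlux.continuous_deriv le_rfl
  set V := deriv fun x => sin x * deriv S x
  replace hL : Continuous fun p : ℝ × ℝ => L p.1 p.2 := hL
  replace hG : Continuous fun p : ℝ × ℝ => G p.1 p.2 := hG
  replace hN : Continuous fun p : ℝ × ℝ => N p.1 p.2 := hN
  let radial : ℝ × ℝ → ℝ := fun p => angularDensity S T p * L p.1 p.2
    - (ℓ * h + μ) * (angularDensity S T p * G p.1 p.2)
  let polar : ℝ × ℝ → ℝ := fun p => h * T p.2 * (N p.1 p.2 * S p.1 - G p.1 p.2 * V p.1)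
  have hradial : Continuous radial := by fun_prop
  have hpolar : Continuous polar := by fun_prop
  have int {f : ℝ × ℝ → ℝ} (hf : Continuous f) : IntegrableOn f angularBox :=
    hf.continuousOn.integrableOn_compact isCompact_angularBox
  have polar_zero : ∫ p in angularBox, polar p = 0 := by
    refine setIntegral_angularBox_eq_zero_of_polar hpolar fun t => ?_
    exact (integral_const_mul (h * T t) _).trans (mul_eq_zero_of_right _
      (hST.setIntegral_polar (hdG · t) (hdGθ · t) (by fun_prop)))
  -- The equation for the kernel turns the remainder into a pure azimuthal term.
  have sum_zero : ∫ p in angularBox, (radial p + polar p) = 0 := by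
    refine setIntegral_angularBox_eq_zero_of_azimuth (hradial.add hpolar) fun θ hθ => ?_
    have hsin : sin θ ≠ 0 := (sin_pos_of_mem_Ioo hθ).ne'
    have azimuthal (t : ℝ) : radial (θ, t) + polar (θ, t)
        = -((sin θ)⁻¹ * (h + sin θ ^ 2) * S θ) * (Gtt θ t * T t + μ * (G θ t * T t)) := by
      simp only [radial, polar, angularDensity]
      field_simp
      linear_combination S θ * T t * heq θ t - h * T t * G θ t * hST.polar_eq θ
    simp only [azimuthal]
    rw [integral_const_mul, hST.setIntegral_azimuth (hdG' θ) (hdGt θ) (by fun_prop) (hper θ)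
      (hper' θ), mul_zero]
  rw [integral_add (int hradial) (int hpolar), polar_zero, add_zero,
    integral_sub (int (by fun_prop)) (int (by fun_prop)), integral_const_mul] at sum_zero
  exact sub_eq_zero.1 sum_zero

end IsAngularMode

/-- The integral of the density `S(θ) T(t)` against the inverse distance from the target point
`(cosh η, cos ν, φ)` to the points of the spheroid with radius `cosh e`. -/
def newtonMoment (η ν φ : ℝ) (S T : ℝ → ℝ) (e : ℝ) : ℝ :=
  ∫ p in angularBox, angularDensity S T p * (√(sqDist η ν φ e p.1 p.2))⁻¹

/-- The integral of the density `S(θ) T(t)` against the `e`-derivative of the inverse distance. -/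
def newtonMomentDeriv (η ν φ : ℝ) (S T : ℝ → ℝ) (e : ℝ) : ℝ :=
  ∫ p in angularBox, angularDensity S T p *
    invSqrtDeriv (sqDist η ν φ e p.1 p.2) (sqDistE η ν φ e p.1 p.2)

/-- The integral of the density `S(θ) T(t)` against the second `e`-derivative of the inverse
distance. -/
def newtonMomentDeriv₂ (η ν φ : ℝ) (S T : ℝ → ℝ) (e : ℝ) : ℝ :=
  ∫ p in angularBox, angularDensity S T p *
    invSqrtDeriv₂ (sqDist η ν φ e p.1 p.2) (sqDistE η ν φ e p.1 p.2) (sqDistEE η ν φ e p.1 p.2)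

section Moments

variable {η e : ℝ} (ν φ : ℝ) {S T : ℝ → ℝ}

theorem continuous_invSqrt_sqDist (he : |e| < η) :
    Continuous fun p : ℝ × ℝ => (√(sqDist η ν φ e p.1 p.2))⁻¹ :=
  continuousOn_univ.1 (continuousOn_invSqrt (by fun_prop) fun _ _ => sqDist_pos he ..)

theorem continuous_invSqrtDeriv_sqDist (he : |e| < η) {D' : ℝ × ℝ → ℝ} (hD' : Continuous D') :
    Continuous fun p => invSqrtDeriv (sqDist η ν φ e p.1 p.2) (D' p) :=
  continuousOn_univ.1 (continuousOn_invSqrtDeriv (by fun_prop) hD'.continuousOn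
    fun _ _ => sqDist_pos he ..)

theorem continuous_invSqrtDeriv₂_sqDist (he : |e| < η) {D' D'' : ℝ × ℝ → ℝ} (hD' : Continuous D')
    (hD'' : Continuous D'') :
    Continuous fun p => invSqrtDeriv₂ (sqDist η ν φ e p.1 p.2) (D' p) (D'' p) :=
  continuousOn_univ.1 (continuousOn_invSqrtDeriv₂ (by fun_prop) hD'.continuousOn hD''.continuousOn
    fun _ _ => sqDist_pos he ..)

theorem hasDerivAt_newtonMoment (hS : Continuous S) (hT : Continuous T) (he : |e| < η) :
    HasDerivAt (newtonMoment η ν φ S T) (newtonMomentDeriv η ν φ S T e) e := by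
  have hd := continuous_angularDensity hS hT
  refine hasDerivAt_setIntegral_of_continuousOn isCompact_angularBox
    (isOpen_lt continuous_abs continuous_const)
    (F := fun x p => angularDensity S T p * (√(sqDist η ν φ x p.1 p.2))⁻¹)
    (F' := fun x p => angularDensity S T p *
      invSqrtDeriv (sqDist η ν φ x p.1 p.2) (sqDistE η ν φ x p.1 p.2))
    (fun x hx => ?_) ?_ (fun x hx p _ => ?_) he
  · exact hd.continuousOn.mul (continuousOn_invSqrt (by fun_prop) fun p _ => sqDist_pos hx ..)
  · exact (hd.comp continuous_snd).continuousOn.mul (continuousOn_invSqrtDeriv (by fun_prop)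
      (by fun_prop) fun q hq => sqDist_pos hq.1 ..)
  · exact (hasDerivAt_invSqrt (hasDerivAt_sqDist_e ..) (sqDist_pos hx ..)).const_mul _

theorem hasDerivAt_newtonMomentDeriv (hS : Continuous S) (hT : Continuous T) (he : |e| < η) :
    HasDerivAt (newtonMomentDeriv η ν φ S T) (newtonMomentDeriv₂ η ν φ S T e) e := by
  have hd := continuous_angularDensity hS hT
  refine hasDerivAt_setIntegral_of_continuousOn isCompact_angularBox
    (isOpen_lt continuous_abs continuous_const)
    (F := fun x p => angularDensity S T p *
      invSqrtDeriv (sqDist η ν φ x p.1 p.2) (sqDistE η ν φ x p.1 p.2))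
    (F' := fun x p => angularDensity S T p * invSqrtDeriv₂ (sqDist η ν φ x p.1 p.2)
      (sqDistE η ν φ x p.1 p.2) (sqDistEE η ν φ x p.1 p.2))
    (fun x hx => ?_) ?_ (fun x hx p _ => ?_) he
  · exact hd.continuousOn.mul (continuousOn_invSqrtDeriv (by fun_prop) (by fun_prop)
      fun p _ => sqDist_pos hx ..)
  · exact (hd.comp continuous_snd).continuousOn.mul (continuousOn_invSqrtDeriv₂ (by fun_prop)
      (by fun_prop) (by fun_prop) fun q hq => sqDist_pos hq.1 ..)
  · exact (hasDerivAt_invSqrtDeriv (D' := fun y => sqDistE η ν φ y p.1 p.2)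
      (hasDerivAt_sqDist_e ..) (hasDerivAt_sqDistE ..) (sqDist_pos hx ..)).const_mul _

variable {ℓ μ : ℝ}

theorem IsAngularMode.setIntegral_radial_laplacian (hST : IsAngularMode ℓ μ S T) (he : |e| < η) :
    ∫ p in angularBox, angularDensity S T p * (sinh e *
        (sinh e * invSqrtDeriv₂ (sqDist η ν φ e p.1 p.2) (sqDistE η ν φ e p.1 p.2)
          (sqDistEE η ν φ e p.1 p.2)
          + cosh e * invSqrtDeriv (sqDist η ν φ e p.1 p.2) (sqDistE η ν φ e p.1 p.2)))
      = (ℓ * sinh e ^ 2 + μ) * newtonMoment η ν φ S T e := by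
  have hD (θ t : ℝ) : 0 < sqDist η ν φ e θ t := sqDist_pos he ν φ θ t
  have hGθθ := continuous_invSqrtDeriv₂_sqDist ν φ he
    (D' := fun p => sqDistTheta η ν φ e p.1 p.2)
    (D'' := fun p => sqDistThetaTheta η ν φ e p.1 p.2) (by fun_prop) (by fun_prop)
  have hdGθ (θ t : ℝ) := hasDerivAt_invSqrtDeriv (D' := fun x => sqDistTheta η ν φ e x t)
    (hasDerivAt_sqDist_theta η ν φ e θ t) (hasDerivAt_sqDistTheta η ν φ e θ t) (hD θ t)
  exact hST.setIntegral_eq_of_separated (sinh e ^ 2)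
    (L := fun θ t => sinh e * (sinh e * invSqrtDeriv₂ (sqDist η ν φ e θ t) (sqDistE η ν φ e θ t)
      (sqDistEE η ν φ e θ t) + cosh e * invSqrtDeriv (sqDist η ν φ e θ t) (sqDistE η ν φ e θ t)))
    (G := fun θ t => (√(sqDist η ν φ e θ t))⁻¹)
    (N := fun θ t => sin θ * invSqrtDeriv₂ (sqDist η ν φ e θ t) (sqDistTheta η ν φ e θ t)
      (sqDistThetaTheta η ν φ e θ t) + cos θ * invSqrtDeriv (sqDist η ν φ e θ t)
      (sqDistTheta η ν φ e θ t))
    (Gt := fun θ t => invSqrtDeriv (sqDist η ν φ e θ t) (sqDistT η ν φ e θ t))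
    (Gtt := fun θ t => invSqrtDeriv₂ (sqDist η ν φ e θ t) (sqDistT η ν φ e θ t)
      (sqDistTT η ν φ e θ t))
    (continuous_const.mul ((continuous_const.mul
      (continuous_invSqrtDeriv₂_sqDist ν φ he (by fun_prop) (by fun_prop))).add
      (continuous_const.mul (continuous_invSqrtDeriv_sqDist ν φ he (by fun_prop)))))
    (continuous_invSqrt_sqDist ν φ he)
    (((continuous_sin.comp continuous_fst).mul hGθθ).add
      ((continuous_cos.comp continuous_fst).mul
        (continuous_invSqrtDeriv_sqDist ν φ he (by fun_prop))))
    (continuous_invSqrtDeriv₂_sqDist ν φ he (by unfold sqDistT; fun_prop) (by fun_prop))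
    (fun θ t => hasDerivAt_invSqrt (hasDerivAt_sqDist_theta ..) (hD θ t))
    (fun θ t => ((hasDerivAt_sin θ).mul (hdGθ θ t)).congr_deriv (add_comm _ _))
    (fun θ t => hasDerivAt_invSqrt (hasDerivAt_sqDist_t ..) (hD θ t))
    (fun θ t => hasDerivAt_invSqrtDeriv (D' := fun x => sqDistT η ν φ e θ x)
      (hasDerivAt_sqDist_t ..) (hasDerivAt_sqDistT ..) (hD θ t))
    (fun θ t => by simp only [sqDist, add_sub_right_comm, cos_add_two_pi, sin_add_two_pi])
    (fun θ t => by
      simp only [sqDist, sqDistT, add_sub_right_comm, cos_add_two_pi, sin_add_two_pi])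
    (fun θ t => invSqrt_sqDist_laplacian (hD θ t))

theorem IsAngularMode.newtonMoment_ode (hST : IsAngularMode ℓ μ S T) (he : |e| < η) :
    sinh e * (sinh e * newtonMomentDeriv₂ η ν φ S T e + cosh e * newtonMomentDeriv η ν φ S T e)
      = (ℓ * sinh e ^ 2 + μ) * newtonMoment η ν φ S T e := by
  have hd := continuous_angularDensity hST.continuous_polar hST.continuous_azimuth
  have int {f : ℝ × ℝ → ℝ} (hf : Continuous f) :
      IntegrableOn (fun p => angularDensity S T p * f p) angularBox :=
    (hd.mul hf).continuousOn.integrableOn_compact isCompact_angularBox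
  rw [← hST.setIntegral_radial_laplacian ν φ he, newtonMomentDeriv₂, newtonMomentDeriv,
    ← integral_const_mul, ← integral_const_mul, ← integral_add
    ((int (continuous_invSqrtDeriv₂_sqDist ν φ he (by fun_prop) (by fun_prop))).const_mul _)
    ((int (continuous_invSqrtDeriv_sqDist ν φ he (by fun_prop))).const_mul _),
    ← integral_const_mul]
  congr 1 with p
  ring

-- Both sides solve the radial equation, and the Wronskian times `sinh e` vanishes at `e = 0`.
theorem IsAngularMode.newtonMoment_wronskian (hST : IsAngularMode ℓ μ S T) {P : ℝ → ℝ}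
    (hP : IsRadialSolution ℓ μ P) (he : e ∈ Set.Ioo 0 η) :
    P e * newtonMomentDeriv η ν φ S T e = deriv P e * newtonMoment η ν φ S T e := by
  have hP' (x : ℝ) : HasDerivAt (deriv P) (deriv (deriv P) x) x :=
    ((contDiff_deriv_of_two hP.contDiff).differentiable one_ne_zero x).hasDerivAt
  have hW {x : ℝ} (hx : |x| < η) := (hasDerivAt_sinh x).mul
    (((hP.contDiff.differentiable two_ne_zero x).hasDerivAt.mul
      (hasDerivAt_newtonMomentDeriv ν φ hST.continuous_polar hST.continuous_azimuth hx)).sub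
      ((hP' x).mul (hasDerivAt_newtonMoment ν φ hST.continuous_polar hST.continuous_azimuth hx)))
  have habs {x : ℝ} (hx : x ∈ Set.Icc 0 e) : |x| < η := by
    rw [abs_of_nonneg hx.1]
    exact hx.2.trans_lt he.2
  obtain ⟨c, hc, hslope⟩ := exists_hasDerivAt_eq_slope _ _ he.1
    (fun x hx => (hW (habs hx)).continuousAt.continuousWithinAt)
    (fun x hx => hW (habs (Set.Ioo_subset_Icc_self hx)))
  have hderiv_zero : sinh c * ((sinh e * (P e * newtonMomentDeriv η ν φ S T e
      - deriv P e * newtonMoment η ν φ S T e)) / e) = 0 := by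
    have hrad := hP.radial_eq c
    rw [((hasDerivAt_sinh c).fun_mul (hP' c)).deriv] at hrad
    simp only [Pi.mul_apply, Pi.sub_apply, sinh_zero, zero_mul, sub_zero] at hslope
    rw [← hslope]
    linear_combination P c * hST.newtonMoment_ode ν φ (habs (Set.Ioo_subset_Icc_self hc))
      - newtonMoment η ν φ S T c * hrad
  simpa [(sinh_pos_iff.2 hc.1).ne', (sinh_pos_iff.2 he.1).ne', he.1.ne', sub_eq_zero]
    using hderiv_zero

end Moments

/-! ### The weak singularity on the spheroid -/

section CentralVersin

variable {ν θ : ℝ} (φ t : ℝ)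

theorem centralVersin_eq_convex_combination (ν φ θ t : ℝ) :
    centralVersin ν φ θ t = (1 + cos (t - φ)) / 2 * (1 - cos (θ - ν))
      + (1 - cos (t - φ)) / 2 * (1 - cos (θ + ν)) := by
  rw [centralVersin, cos_sub θ, cos_add]
  ring

theorem one_sub_cos_polar_le_centralVersin (hν : ν ∈ Set.Icc 0 π) (hθ : θ ∈ Set.Icc 0 π) :
    1 - cos (θ - ν) ≤ centralVersin ν φ θ t := by
  have hsin := mul_nonneg (sin_nonneg_of_mem_Icc hθ) (sin_nonneg_of_mem_Icc hν)
  have hcos : cos (θ + ν) ≤ cos (θ - ν) := by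
    rw [cos_add, cos_sub]
    linarith
  rw [centralVersin_eq_convex_combination]
  nlinarith only [hcos, cos_le_one (t - φ)]

theorem one_sub_cos_azimuth_le_centralVersin (hν : ν ∈ Set.Icc 0 π) (hθ : θ ∈ Set.Icc 0 π) :
    (1 - |cos ν|) / 2 * (1 - cos (t - φ)) ≤ centralVersin ν φ θ t := by
  have hcos : cos (θ + ν) ≤ |cos ν| := calc
    cos (θ + ν) ≤ cos θ * cos ν := by
      rw [cos_add]
      exact sub_le_self _ (mul_nonneg (sin_nonneg_of_mem_Icc hθ) (sin_nonneg_of_mem_Icc hν))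
    _ ≤ |cos θ * cos ν| := le_abs_self _
    _ ≤ |cos ν| := by
      rw [abs_mul]
      exact mul_le_of_le_one_left (abs_nonneg _) (abs_cos_le_one θ)
  rw [centralVersin_eq_convex_combination]
  nlinarith only [mul_nonneg (neg_le_iff_add_nonneg'.1 (neg_one_le_cos (t - φ)))
    (sub_nonneg.2 (cos_le_one (θ - ν))), mul_nonneg (sub_nonneg.2 (cos_le_one (t - φ)))
    (sub_nonneg.2 hcos)]

theorem abs_cos_lt_one_of_mem_Ioo (hν : ν ∈ Set.Ioo 0 π) : |cos ν| < 1 := by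
  rw [abs_lt, ← cos_pi, ← cos_zero]
  exact ⟨cos_lt_cos_of_nonneg_of_le_pi hν.1.le le_rfl hν.2,
    cos_lt_cos_of_nonneg_of_le_pi le_rfl hν.2.le hν.1⟩

end CentralVersin

@[fun_prop]
theorem continuous_centralVersin (ν φ : ℝ) :
    Continuous fun p : ℝ × ℝ => centralVersin ν φ p.1 p.2 := by
  unfold centralVersin
  fun_prop

theorem abs_le_pi_mul_sqrt_one_sub_cos {x : ℝ} (hx : |x| ≤ π) : |x| ≤ π * √(1 - cos x) := by
  have hcos := cos_le_one_sub_mul_cos_sq hx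
  rw [← div_le_iff₀' pi_pos]
  refine le_sqrt_of_sq_le ?_
  rw [div_pow, sq_abs]
  rw [div_mul_eq_mul_div, mul_div_assoc] at hcos
  linarith [div_nonneg (sq_nonneg x) (sq_nonneg π)]

theorem intervalIntegrable_inv_sqrt_sqrt_one_sub_cos_zero_pi :
    IntervalIntegrable (fun x => (√√(1 - cos x))⁻¹) volume 0 π := by
  refine ((intervalIntegral.intervalIntegrable_rpow' (r := -1 / 2) (by norm_num)).const_mul
    √π).mono_fun (by fun_prop : Measurable _).aestronglyMeasurable ?_
  filter_upwards [ae_restrict_mem measurableSet_uIoc] with x hx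
  rw [Set.uIoc_of_le pi_pos.le] at hx
  have hsqrt := abs_le_pi_mul_sqrt_one_sub_cos (abs_le.2 ⟨by linarith [hx.1, pi_pos], hx.2⟩)
  rw [abs_of_pos hx.1] at hsqrt
  have hpos : 0 < √(1 - cos x) := pos_of_mul_pos_right (hx.1.trans_le hsqrt) pi_pos.le
  rw [norm_of_nonneg (by positivity), neg_div, rpow_neg hx.1.le, ← sqrt_eq_rpow,
    norm_of_nonneg (by positivity), ← div_eq_mul_inv, inv_eq_one_div,
    div_le_div_iff₀ (sqrt_pos.2 hpos) (sqrt_pos.2 hx.1), one_mul, ← sqrt_mul pi_pos.le]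
  exact sqrt_le_sqrt hsqrt

theorem intervalIntegrable_inv_sqrt_sqrt_one_sub_cos (a b c : ℝ) :
    IntervalIntegrable (fun x => (√√(1 - cos (x - c)))⁻¹) volume a b := by
  have hper : Function.Periodic (fun x => (√√(1 - cos x))⁻¹) (2 * π) := fun x => by
    simp only [cos_add_two_pi]
  have hright := intervalIntegrable_inv_sqrt_sqrt_one_sub_cos_zero_pi
  have hleft := (IntervalIntegrable.iff_comp_neg (by simp)).1 hright
  simp only [cos_neg, neg_zero] at hleft
  have hperiod : IntervalIntegrable (fun x => (√√(1 - cos x))⁻¹) volume (-π) (-π + 2 * π) := by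
    rw [two_mul, neg_add_cancel_left]
    exact hleft.symm.trans hright
  simpa using (hper.intervalIntegrable two_pi_pos.ne' hperiod (a - c) (b - c)).comp_sub_right c

theorem ae_one_sub_cos_pos (c : ℝ) : ∀ᵐ x : ℝ, 0 < 1 - cos (x - c) := by
  have hcount : {x : ℝ | cos (x - c) = 1}.Countable := by
    refine (Set.countable_range fun k : ℤ => (k : ℝ) * (2 * π) + c).mono fun x hx => ?_
    obtain ⟨k, hk⟩ := (cos_eq_one_iff _).1 hx
    exact ⟨k, eq_sub_iff_add_eq.1 hk⟩
  filter_upwards [hcount.ae_notMem volume] with x hx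
  exact sub_pos.2 (lt_of_le_of_ne (cos_le_one _) hx)

section WeakSingularity

variable {ν : ℝ} (φ : ℝ) (hν : ν ∈ Set.Ioo 0 π)
include hν

theorem ae_centralVersin_pos :
    ∀ᵐ p ∂volume.restrict angularBox, p ∈ angularBox ∧ 0 < centralVersin ν φ p.1 p.2 := by
  filter_upwards [ae_restrict_of_ae (Measure.quasiMeasurePreserving_fst.ae (ae_one_sub_cos_pos ν)),
    ae_restrict_mem isCompact_angularBox.measurableSet] with p hpos hp
  exact ⟨hp, hpos.trans_le
    (one_sub_cos_polar_le_centralVersin φ p.2 (Set.Ioo_subset_Icc_self hν) hp.1)⟩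

-- The geometric mean of the two lower bounds splits the singularity into one-dimensional factors.
theorem integrableOn_inv_sqrt_centralVersin :
    IntegrableOn (fun p : ℝ × ℝ => (√(centralVersin ν φ p.1 p.2))⁻¹) angularBox := by
  obtain ⟨κ, hκ⟩ : ∃ κ, κ = (1 - |cos ν|) / 2 := ⟨_, rfl⟩
  have hκ0 : 0 < κ := by linarith [abs_cos_lt_one_of_mem_Ioo hν]
  have hint := ((intervalIntegrable_iff_integrableOn_Icc_of_le pi_pos.le).1
    (intervalIntegrable_inv_sqrt_sqrt_one_sub_cos 0 π ν)).integrable.mul_prod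
    ((intervalIntegrable_iff_integrableOn_Icc_of_le two_pi_pos.le).1
    (intervalIntegrable_inv_sqrt_sqrt_one_sub_cos 0 (2 * π) φ)).integrable
  rw [← restrict_angularBox] at hint
  refine (hint.const_mul (√√κ)⁻¹).mono' (by fun_prop : Measurable _).aestronglyMeasurable ?_
  filter_upwards [ae_restrict_mem isCompact_angularBox.measurableSet,
    ae_restrict_of_ae (Measure.quasiMeasurePreserving_fst.ae (ae_one_sub_cos_pos ν)),
    ae_restrict_of_ae (Measure.quasiMeasurePreserving_snd.ae (ae_one_sub_cos_pos φ))]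
    with p hp hθ ht
  have hν' := Set.Ioo_subset_Icc_self hν
  have hpolar := one_sub_cos_polar_le_centralVersin φ p.2 hν' hp.1
  have hazimuth := one_sub_cos_azimuth_le_centralVersin φ p.2 hν' hp.1
  rw [← hκ] at hazimuth
  rw [norm_of_nonneg (by positivity), ← mul_inv, ← mul_inv, ← sqrt_mul (sqrt_nonneg _),
    ← sqrt_mul (sqrt_nonneg _), ← sqrt_mul hθ.le, ← sqrt_mul hκ0.le]
  refine inv_anti₀ (by positivity) (sqrt_le_sqrt (sqrt_le_iff.2 ⟨centralVersin_nonneg .., ?_⟩))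
  rw [mul_left_comm, sq]
  exact mul_le_mul hpolar hazimuth (by positivity) (centralVersin_nonneg ..)

theorem integrableOn_of_le_inv_sqrt_centralVersin {f : ℝ × ℝ → ℝ} (hf : Measurable f) {C : ℝ}
    (hC : ∀ p ∈ angularBox, 0 < centralVersin ν φ p.1 p.2 →
      |f p| ≤ C * (√(centralVersin ν φ p.1 p.2))⁻¹) : IntegrableOn f angularBox := by
  refine ((integrableOn_inv_sqrt_centralVersin φ hν).const_mul C).mono' hf.aestronglyMeasurable ?_
  filter_upwards [ae_centralVersin_pos φ hν] with p hp
  exact hC p hp.1 hp.2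

theorem tendsto_setIntegral_of_le_inv_sqrt_centralVersin {l : Filter ℝ} [l.IsCountablyGenerated]
    {F : ℝ → ℝ × ℝ → ℝ} {f : ℝ × ℝ → ℝ} (hF : ∀ x, Measurable (F x)) {C : ℝ}
    (hC : ∀ᶠ x in l, ∀ p ∈ angularBox, 0 < centralVersin ν φ p.1 p.2 →
      |F x p| ≤ C * (√(centralVersin ν φ p.1 p.2))⁻¹)
    (hlim : ∀ p, 0 < centralVersin ν φ p.1 p.2 → Tendsto (F · p) l (𝓝 (f p))) :
    Tendsto (fun x => ∫ p in angularBox, F x p) l (𝓝 (∫ p in angularBox, f p)) := by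
  refine tendsto_integral_filter_of_dominated_convergence _
    (Eventually.of_forall fun x => (hF x).aestronglyMeasurable) ?_
    ((integrableOn_inv_sqrt_centralVersin φ hν).const_mul C) ?_
  · filter_upwards [hC] with x hx
    filter_upwards [ae_centralVersin_pos φ hν] with p hp
    exact hx p hp.1 hp.2
  · filter_upwards [ae_centralVersin_pos φ hν] with p hp
    exact hlim p hp.2

end WeakSingularity

/-! ### The limit onto the spheroid -/

section Bounds

variable {D D' c k w : ℝ}

theorem inv_sqrt_le_of_mul_le (hk : 0 < k) (hw : 0 < w) (h : k * w ≤ D) :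
    (√D)⁻¹ ≤ (√k)⁻¹ * (√w)⁻¹ := by
  rw [← mul_inv, ← sqrt_mul hk.le]
  exact inv_anti₀ (sqrt_pos.2 (mul_pos hk hw)) (sqrt_le_sqrt h)

theorem abs_invSqrtDeriv : |invSqrtDeriv D D'| = (√D)⁻¹ ^ 3 * (|D'| / 2) := by
  rw [invSqrtDeriv, abs_mul, abs_mul, abs_neg, abs_of_nonneg (by positivity : 0 ≤ (√D)⁻¹ ^ 3),
    abs_of_pos one_half_pos]
  ring

theorem abs_invSqrtDeriv_le_of_le_mul (hD : 0 < D) (h : |D'| ≤ 2 * c * D) :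
    |invSqrtDeriv D D'| ≤ c * (√D)⁻¹ := by
  have := sqrt_pos.2 hD
  calc |invSqrtDeriv D D'| ≤ (√D)⁻¹ ^ 3 * (2 * c * √D ^ 2 / 2) := by
        rw [abs_invSqrtDeriv, sq_sqrt hD.le]
        gcongr
    _ = c * (√D)⁻¹ := by field_simp

theorem abs_invSqrtDeriv_le_of_le_mul_sqrt (hD : 0 < D) (h : |D'| ≤ 2 * c * √D) :
    |invSqrtDeriv D D'| ≤ c * D⁻¹ := by
  have := sqrt_pos.2 hD
  calc |invSqrtDeriv D D'| ≤ (√D)⁻¹ ^ 3 * (2 * c * √D / 2) := by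
        rw [abs_invSqrtDeriv]
        gcongr
    _ = c * (√D ^ 2)⁻¹ := by field_simp
    _ = c * D⁻¹ := by rw [sq_sqrt hD.le]

end Bounds

section SurfaceDistance

variable (η ν φ e θ t : ℝ)

theorem sqDist_self :
    sqDist η ν φ η θ t = 2 * sinh η ^ 2 * centralVersin ν φ θ t + (cos θ - cos ν) ^ 2 := by
  simp only [sqDist_eq_centralVersin, sub_self, cosh_zero]
  ring

theorem sqDistE_self :
    sqDistE η ν φ η θ t = 2 * sinh η * cosh η * centralVersin ν φ θ t := by
  rw [sqDistE, centralVersin]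
  ring

theorem hasDerivAt_sqDist_self :
    HasDerivAt (fun x => sqDist x ν φ x θ t) (2 * sqDistE η ν φ η θ t) η := by
  simp only [sqDist_self, sqDistE_self]
  refine ((((hasDerivAt_sinh η).fun_pow 2).const_mul 2).mul_const _).add_const _ |>.congr_deriv ?_
  ring

-- Cauchy–Schwarz: the velocity of the source point has length at most `cosh e`.
theorem abs_sqDistE_le : |sqDistE η ν φ e θ t| ≤ 2 * cosh e * √(sqDist η ν φ e θ t) := by
  obtain ⟨x, hx⟩ : ∃ x, x = sinh e * sin θ * cos (t - φ) - sinh η * sin ν := ⟨_, rfl⟩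
  obtain ⟨y, hy⟩ : ∃ y, y = sinh e * sin θ * sin (t - φ) := ⟨_, rfl⟩
  obtain ⟨z, hz⟩ : ∃ z, z = cosh e * cos θ - cosh η * cos ν := ⟨_, rfl⟩
  have hE : sqDistE η ν φ e θ t = 2 * (cosh e * sin θ * cos (t - φ) * x
      + cosh e * sin θ * sin (t - φ) * y + sinh e * cos θ * z) := by
    rw [sqDistE, hx, hy, hz]
    linear_combination (-2 * sinh e * cosh e * sin θ ^ 2) * sin_sq_add_cos_sq (t - φ)
      - 2 * sinh e * cosh e * sin_sq_add_cos_sq θ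
  have hspeed : (cosh e * sin θ * cos (t - φ)) ^ 2 + (cosh e * sin θ * sin (t - φ)) ^ 2
      + (sinh e * cos θ) ^ 2 = cosh e ^ 2 - cos θ ^ 2 := by
    linear_combination (cosh e * sin θ) ^ 2 * sin_sq_add_cos_sq (t - φ)
      + cosh e ^ 2 * sin_sq_add_cos_sq θ - cos θ ^ 2 * cosh_sq e
  rw [← sqrt_sq (cosh_pos e).le, mul_assoc, ← sqrt_mul (sq_nonneg _), hE, abs_mul, abs_two]
  refine mul_le_mul_of_nonneg_left (abs_le_sqrt ?_) zero_le_two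
  rw [sqDist, ← hx, ← hy, ← hz]
  generalize cosh e * sin θ * cos (t - φ) = a at *
  generalize cosh e * sin θ * sin (t - φ) = b at *
  generalize sinh e * cos θ = d at *
  calc (a * x + b * y + d * z) ^ 2 ≤ (a ^ 2 + b ^ 2 + d ^ 2) * (x ^ 2 + y ^ 2 + z ^ 2) := by
        nlinarith only [sq_nonneg (a * y - b * x), sq_nonneg (a * z - d * x),
          sq_nonneg (b * z - d * y)]
    _ ≤ cosh e ^ 2 * (x ^ 2 + y ^ 2 + z ^ 2) := by
        rw [hspeed]
        gcongr
        exact sub_le_self _ (sq_nonneg _)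

end SurfaceDistance

theorem exists_abs_angularDensity_le {S T : ℝ → ℝ} (hS : Continuous S) (hT : Continuous T) :
    ∃ M, 0 ≤ M ∧ ∀ p ∈ angularBox, |angularDensity S T p| ≤ M := by
  obtain ⟨M, hM⟩ := isCompact_angularBox.exists_bound_of_continuousOn
    (continuous_angularDensity hS hT).continuousOn
  exact ⟨max M 0, le_max_right _ _, fun p hp => (hM p hp).trans (le_max_left _ _)⟩

section SurfaceMoments

variable {η ν φ : ℝ} {S T : ℝ → ℝ}

theorem mul_centralVersin_le_sqDist {e e₀ : ℝ} (he₀ : 0 ≤ e₀) (he : e₀ ≤ e) (hη : e₀ ≤ η)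
    (θ t : ℝ) : 2 * sinh e₀ ^ 2 * centralVersin ν φ θ t ≤ sqDist η ν φ e θ t := by
  have : 0 ≤ sinh e₀ := sinh_nonneg_iff.2 he₀
  have hpos := mul_nonneg zero_le_two (sinh_nonneg_iff.2 (he₀.trans hη))
  have hw := centralVersin_nonneg ν φ θ t
  calc 2 * sinh e₀ ^ 2 * centralVersin ν φ θ t
      = 2 * sinh e₀ * sinh e₀ * centralVersin ν φ θ t := by ring
    _ ≤ 2 * sinh η * sinh e * centralVersin ν φ θ t := by gcongr <;> exact sinh_le_sinh.2 ‹_›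
    _ ≤ sqDist η ν φ e θ t := (le_add_of_nonneg_right (sq_nonneg _)).trans (sqDist_ge ..)

theorem abs_mul_inv_sqrt_sqDist_le {M x e e₀ θ t : ℝ} (hx : |x| ≤ M) (he₀ : 0 < e₀)
    (he : e₀ ≤ e) (hη : e₀ ≤ η) (hw : 0 < centralVersin ν φ θ t) :
    |x * (√(sqDist η ν φ e θ t))⁻¹|
      ≤ M * (√(2 * sinh e₀ ^ 2))⁻¹ * (√(centralVersin ν φ θ t))⁻¹ := by
  have := sinh_pos_iff.2 he₀
  rw [abs_mul, abs_of_nonneg (inv_nonneg.2 (sqrt_nonneg _)), mul_assoc]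
  exact mul_le_mul hx (inv_sqrt_le_of_mul_le (by positivity) hw
    (mul_centralVersin_le_sqDist he₀.le he hη θ t)) (by positivity) ((abs_nonneg x).trans hx)

theorem sqDist_self_pos (ν φ θ t : ℝ) (hη : 0 < η) (hw : 0 < centralVersin ν φ θ t) :
    0 < sqDist η ν φ η θ t :=
  (mul_pos (mul_pos two_pos (pow_pos (sinh_pos_iff.2 hη) 2)) hw).trans_le
    (mul_centralVersin_le_sqDist hη.le le_rfl le_rfl θ t)

theorem abs_mul_invSqrtDeriv_surface_le {M x e₀ e₁ θ t : ℝ} (hx : |x| ≤ M) (he₀ : 0 < e₀)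
    (hη : e₀ ≤ η) (hη' : η ≤ e₁) (hw : 0 < centralVersin ν φ θ t) :
    |x * invSqrtDeriv (sqDist η ν φ η θ t) (sqDistE η ν φ η θ t)|
      ≤ M * (√(2 * sinh e₀ ^ 2))⁻¹ * (cosh e₁ / (2 * sinh e₀))
        * (√(centralVersin ν φ θ t))⁻¹ := by
  have hη0 : 0 < η := he₀.trans_le hη
  have hs := sinh_pos_iff.2 he₀
  have hs' : sinh e₀ ≤ sinh η := sinh_le_sinh.2 hη
  have := cosh_pos η
  have hc' : cosh η ≤ cosh e₁ := by
    rwa [cosh_le_cosh, abs_of_pos hη0, abs_of_pos (hη0.trans_le hη')]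
  have hE : |sqDistE η ν φ η θ t| ≤ 2 * (cosh e₁ / (2 * sinh e₀)) * sqDist η ν φ η θ t := by
    rw [sqDistE_self, abs_of_pos (by have := hs.trans_le hs'; positivity)]
    calc 2 * sinh η * cosh η * centralVersin ν φ θ t
        = cosh η / sinh η * (2 * sinh η ^ 2 * centralVersin ν φ θ t) := by
          have := (hs.trans_le hs').ne'
          field_simp
      _ ≤ cosh e₁ / sinh e₀ * sqDist η ν φ η θ t := by
          gcongr
          exact mul_centralVersin_le_sqDist hη0.le le_rfl le_rfl θ t
      _ = _ := by field_simp
  calc |x * invSqrtDeriv (sqDist η ν φ η θ t) (sqDistE η ν φ η θ t)|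
      ≤ |x| * (cosh e₁ / (2 * sinh e₀) * (√(sqDist η ν φ η θ t))⁻¹) := by
        rw [abs_mul]
        gcongr
        exact abs_invSqrtDeriv_le_of_le_mul (sqDist_self_pos ν φ θ t hη0 hw) hE
    _ = cosh e₁ / (2 * sinh e₀) * |x * (√(sqDist η ν φ η θ t))⁻¹| := by
        rw [abs_mul, abs_of_nonneg (inv_nonneg.2 (sqrt_nonneg _))]
        ring
    _ ≤ cosh e₁ / (2 * sinh e₀)
        * (M * (√(2 * sinh e₀ ^ 2))⁻¹ * (√(centralVersin ν φ θ t))⁻¹) := by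
        gcongr
        exact abs_mul_inv_sqrt_sqDist_le hx he₀ hη hη hw
    _ = _ := by ring

theorem measurable_mul_inv_sqrt_sqDist {f : ℝ × ℝ → ℝ} (hf : Measurable f) (η ν φ e : ℝ) :
    Measurable fun p => f p * (√(sqDist η ν φ e p.1 p.2))⁻¹ :=
  hf.mul (by fun_prop : Continuous fun p : ℝ × ℝ => sqDist η ν φ e p.1 p.2).measurable.sqrt.inv

theorem measurable_mul_invSqrtDeriv_sqDist {f : ℝ × ℝ → ℝ} (hf : Measurable f) (η ν φ e : ℝ) :
    Measurable fun p =>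
      f p * invSqrtDeriv (sqDist η ν φ e p.1 p.2) (sqDistE η ν φ e p.1 p.2) :=
  hf.mul ((((by fun_prop : Continuous fun p : ℝ × ℝ =>
    sqDist η ν φ e p.1 p.2).measurable.sqrt.inv.pow_const 3).const_mul _).mul
    (by fun_prop : Continuous fun p : ℝ × ℝ => sqDistE η ν φ e p.1 p.2).measurable)

variable (φ) (hν : ν ∈ Set.Ioo 0 π) (hη : 0 < η)
include hν

theorem tendsto_newtonMoment_surface_atTop (hS : Continuous S) (hT : Continuous T) :
    Tendsto (fun x => newtonMoment x ν φ S T x) atTop (𝓝 0) := by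
  obtain ⟨M, -, hM⟩ := exists_abs_angularDensity_le hS hT
  have hd := (continuous_angularDensity hS hT).measurable
  have := tendsto_setIntegral_of_le_inv_sqrt_centralVersin φ hν (l := atTop) (f := 0)
    (fun x => measurable_mul_inv_sqrt_sqDist hd x ν φ x)
    ((eventually_ge_atTop 1).mono fun x hx p hp hw =>
      abs_mul_inv_sqrt_sqDist_le (hM p hp) one_pos hx hx hw) fun p hw => ?_
  · simpa only [Pi.zero_apply, integral_zero, newtonMoment] using this
  · have hD : Tendsto (fun x => sqDist x ν φ x p.1 p.2) atTop atTop := by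
      refine tendsto_atTop_mono' _ ((eventually_ge_atTop 0).mono fun x hx =>
        mul_centralVersin_le_sqDist hx le_rfl le_rfl p.1 p.2) ?_
      exact ((((tendsto_pow_atTop two_ne_zero).comp sinhOrderIso.tendsto_atTop).const_mul_atTop
        two_pos).atTop_mul_const hw)
    simpa using (tendsto_inv_atTop_zero.comp (tendsto_sqrt_atTop.comp hD)).const_mul
      (angularDensity S T p)

include hη

theorem integrableOn_newtonMoment_surface (hS : Continuous S) (hT : Continuous T) :
    IntegrableOn (fun p => angularDensity S T p * (√(sqDist η ν φ η p.1 p.2))⁻¹) angularBox := by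
  obtain ⟨M, -, hM⟩ := exists_abs_angularDensity_le hS hT
  exact integrableOn_of_le_inv_sqrt_centralVersin φ hν
    (measurable_mul_inv_sqrt_sqDist (continuous_angularDensity hS hT).measurable η ν φ η)
    fun p hp hw => abs_mul_inv_sqrt_sqDist_le (hM p hp) hη le_rfl le_rfl hw

theorem tendsto_newtonMoment_surface (hS : Continuous S) (hT : Continuous T) :
    Tendsto (newtonMoment η ν φ S T) (𝓝[<] η) (𝓝 (newtonMoment η ν φ S T η)) := by
  obtain ⟨M, -, hM⟩ := exists_abs_angularDensity_le hS hT
  refine tendsto_setIntegral_of_le_inv_sqrt_centralVersin φ hν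
    (fun e => measurable_mul_inv_sqrt_sqDist (continuous_angularDensity hS hT).measurable η ν φ e)
    (Eventually.mono (Ioo_mem_nhdsLT (half_lt_self hη)) fun e he p hp hw =>
      abs_mul_inv_sqrt_sqDist_le (hM p hp) (half_pos hη) he.1.le (half_le_self hη.le) hw)
    fun p hw => ?_
  exact ((hasDerivAt_invSqrt (hasDerivAt_sqDist_e ..)
    (sqDist_self_pos ν φ p.1 p.2 hη hw)).continuousAt.tendsto.mono_left
    nhdsWithin_le_nhds).const_mul _

theorem tendsto_setIntegral_mul_invSqrtDeriv_surface {f : ℝ × ℝ → ℝ} (hf : Measurable f) {C : ℝ}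
    (hC : ∀ p ∈ angularBox, |f p| ≤ C * √(centralVersin ν φ p.1 p.2)) :
    Tendsto (fun e => ∫ p in angularBox,
        f p * invSqrtDeriv (sqDist η ν φ e p.1 p.2) (sqDistE η ν φ e p.1 p.2)) (𝓝[<] η)
      (𝓝 (∫ p in angularBox,
        f p * invSqrtDeriv (sqDist η ν φ η p.1 p.2) (sqDistE η ν φ η p.1 p.2))) := by
  refine tendsto_setIntegral_of_le_inv_sqrt_centralVersin φ hν
    (fun e => measurable_mul_invSqrtDeriv_sqDist hf η ν φ e)
    (C := C * (cosh η * (2 * sinh (η / 2) ^ 2)⁻¹))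
    (Eventually.mono (Ioo_mem_nhdsLT (half_lt_self hη)) fun e he p hp hw => ?_) fun p hw => ?_
  · have := sinh_pos_iff.2 (half_pos hη)
    have hle := mul_centralVersin_le_sqDist (ν := ν) (φ := φ) (half_pos hη).le he.1.le
      (half_le_self hη.le) p.1 p.2
    have hcosh : cosh e ≤ cosh η := by
      rw [cosh_le_cosh, abs_of_pos hη, abs_of_pos ((half_pos hη).trans he.1)]
      exact he.2.le
    rw [abs_mul]
    calc |f p| * |invSqrtDeriv (sqDist η ν φ e p.1 p.2) (sqDistE η ν φ e p.1 p.2)|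
        ≤ C * √(centralVersin ν φ p.1 p.2)
          * (cosh η * (2 * sinh (η / 2) ^ 2 * centralVersin ν φ p.1 p.2)⁻¹) := by
          have hD := lt_of_lt_of_le (by positivity) hle
          have := cosh_pos η
          refine mul_le_mul (hC p hp) ((abs_invSqrtDeriv_le_of_le_mul_sqrt hD
            (abs_sqDistE_le ..)).trans ?_) (abs_nonneg _) ((abs_nonneg _).trans (hC p hp))
          gcongr
      _ = C * (cosh η * (2 * sinh (η / 2) ^ 2)⁻¹) * (√(centralVersin ν φ p.1 p.2)
          * (centralVersin ν φ p.1 p.2)⁻¹) := by rw [mul_inv]; ring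
      _ = _ := by rw [← div_eq_mul_inv (√_), sqrt_div_self]
  · exact ((hasDerivAt_invSqrtDeriv (D' := fun x => sqDistE η ν φ x p.1 p.2)
      (hasDerivAt_sqDist_e ..) (hasDerivAt_sqDistE ..)
      (sqDist_self_pos ν φ p.1 p.2 hη hw)).continuousAt.tendsto.mono_left
      nhdsWithin_le_nhds).const_mul _

theorem integrableOn_newtonMomentDeriv_surface (hS : Continuous S) (hT : Continuous T) :
    IntegrableOn (fun p => angularDensity S T p *
      invSqrtDeriv (sqDist η ν φ η p.1 p.2) (sqDistE η ν φ η p.1 p.2)) angularBox := by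
  obtain ⟨M, -, hM⟩ := exists_abs_angularDensity_le hS hT
  exact integrableOn_of_le_inv_sqrt_centralVersin φ hν
    (measurable_mul_invSqrtDeriv_sqDist (continuous_angularDensity hS hT).measurable η ν φ η)
    fun p hp hw => abs_mul_invSqrtDeriv_surface_le (hM p hp) hη le_rfl le_rfl hw

-- The distance is symmetric, so moving source and target together doubles the derivative.
theorem hasDerivAt_newtonMoment_surface (hS : Continuous S) (hT : Continuous T) :
    HasDerivAt (fun x => newtonMoment x ν φ S T x) (2 * newtonMomentDeriv η ν φ S T η) η := by
  obtain ⟨M, -, hM⟩ := exists_abs_angularDensity_le hS hT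
  have hd := (continuous_angularDensity hS hT).measurable
  have key := (hasDerivAt_integral_of_dominated_loc_of_deriv_le
    (F := fun x p => angularDensity S T p * (√(sqDist x ν φ x p.1 p.2))⁻¹)
    (F' := fun x p => 2 * (angularDensity S T p *
      invSqrtDeriv (sqDist x ν φ x p.1 p.2) (sqDistE x ν φ x p.1 p.2)))
    (bound := fun p => 2 * (M * (√(2 * sinh (η / 2) ^ 2))⁻¹
      * (cosh (2 * η) / (2 * sinh (η / 2))) * (√(centralVersin ν φ p.1 p.2))⁻¹))
    (Ioo_mem_nhds (half_lt_self hη) (lt_two_mul_self hη))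
    (Eventually.of_forall fun x =>
      (measurable_mul_inv_sqrt_sqDist hd x ν φ x).aestronglyMeasurable)
    (integrableOn_newtonMoment_surface φ hν hη hS hT)
    ((measurable_mul_invSqrtDeriv_sqDist hd η ν φ η).const_mul 2).aestronglyMeasurable
    ((ae_centralVersin_pos φ hν).mono fun p hp x hx => ?_)
    (((integrableOn_inv_sqrt_centralVersin φ hν).const_mul _).const_mul 2)
    ((ae_centralVersin_pos φ hν).mono fun p hp x hx => ?_)).2
  · rwa [integral_const_mul] at key
  · rw [norm_mul, norm_two]
    exact mul_le_mul_of_nonneg_left (abs_mul_invSqrtDeriv_surface_le (hM p hp.1) (half_pos hη)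
      hx.1.le hx.2.le hp.2) zero_le_two
  · refine ((hasDerivAt_invSqrt (hasDerivAt_sqDist_self ..) (sqDist_self_pos ν φ p.1 p.2
      ((half_pos hη).trans hx.1) hp.2)).const_mul _).congr_deriv ?_
    rw [invSqrtDeriv, invSqrtDeriv]
    ring

end SurfaceMoments

section Jump

theorem exists_abs_le_of_periodic {f : ℝ → ℝ} (hf : Continuous f)
    (hper : Function.Periodic f (2 * π)) : ∃ M, ∀ x, |f x| ≤ M := by
  obtain ⟨M, hM⟩ := (hper.isBounded_of_continuous two_pi_pos.ne' hf).exists_norm_le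
  exact ⟨M, fun x => hM _ (Set.mem_range_self x)⟩

theorem exists_abs_sub_le_sqrt_one_sub_cos {f : ℝ → ℝ} (hf : ContDiff ℝ 1 f)
    (hper : Function.Periodic f (2 * π)) :
    ∃ L, 0 ≤ L ∧ ∀ x y, |f x - f y| ≤ L * √(1 - cos (x - y)) := by
  obtain ⟨M, hM⟩ := exists_abs_le_of_periodic (hf.continuous_deriv le_rfl) (periodic_deriv hper)
  have hM0 : 0 ≤ M := (abs_nonneg _).trans (hM 0)
  have hlip (x y : ℝ) : |f x - f y| ≤ M * |x - y| :=
    convex_univ.norm_image_sub_le_of_norm_deriv_le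
      (fun z _ => hf.differentiable one_ne_zero z) (fun z _ => hM z) (Set.mem_univ y)
      (Set.mem_univ x)
  refine ⟨M * π, by positivity, fun x y => ?_⟩
  obtain ⟨k, hk, -⟩ := existsUnique_sub_zsmul_mem_Ico two_pi_pos x (y - π)
  have hk' : |x - k • (2 * π) - y| ≤ π := abs_le.2 ⟨by linarith [hk.1], by linarith [hk.2]⟩
  have hcos : cos (x - k • (2 * π) - y) = cos (x - y) := by
    rw [sub_right_comm, cos_periodic.sub_zsmul_eq]
  calc |f x - f y| = |f (x - k • (2 * π)) - f y| := by rw [hper.sub_zsmul_eq]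
    _ ≤ M * |x - k • (2 * π) - y| := hlip _ _
    _ ≤ M * (π * √(1 - cos (x - k • (2 * π) - y))) := by
        gcongr
        exact abs_le_pi_mul_sqrt_one_sub_cos hk'
    _ = M * π * √(1 - cos (x - y)) := by rw [hcos, mul_assoc]

theorem exists_abs_density_jump_le {S T : ℝ → ℝ} (hS : ContDiff ℝ 1 S)
    (hSper : Function.Periodic S (2 * π)) (hT : ContDiff ℝ 1 T)
    (hTper : Function.Periodic T (2 * π)) {ν : ℝ} (φ : ℝ) (hν : ν ∈ Set.Ioo 0 π) :
    ∃ C, ∀ p ∈ angularBox, |angularDensity S T p - S ν * T φ * angularDensity 1 1 p|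
      ≤ C * √(centralVersin ν φ p.1 p.2) := by
  obtain ⟨K, hK0, hK⟩ := exists_abs_sub_le_sqrt_one_sub_cos hS hSper
  obtain ⟨L, hL0, hL⟩ := exists_abs_sub_le_sqrt_one_sub_cos hT hTper
  obtain ⟨B, hB⟩ := exists_abs_le_of_periodic hT.continuous hTper
  obtain ⟨κ, hκ⟩ : ∃ κ, κ = (1 - |cos ν|) / 2 := ⟨_, rfl⟩
  have hκ0 : 0 < κ := by linarith [abs_cos_lt_one_of_mem_Ioo hν]
  have hν' := Set.Ioo_subset_Icc_self hν
  refine ⟨K * B + |S ν| * (L * (√κ)⁻¹), fun p hp => ?_⟩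
  have hpolar := sqrt_le_sqrt (one_sub_cos_polar_le_centralVersin φ p.2 hν' hp.1)
  have hazimuth : √(1 - cos (p.2 - φ)) ≤ (√κ)⁻¹ * √(centralVersin ν φ p.1 p.2) := by
    rw [le_inv_mul_iff₀ (sqrt_pos.2 hκ0), ← sqrt_mul hκ0.le, hκ]
    exact sqrt_le_sqrt (one_sub_cos_azimuth_le_centralVersin φ p.2 hν' hp.1)
  calc |angularDensity S T p - S ν * T φ * angularDensity 1 1 p|
      = |sin p.1| * |(S p.1 - S ν) * T p.2 + S ν * (T p.2 - T φ)| := by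
        rw [← abs_mul]
        congr 1
        simp only [angularDensity, Pi.one_apply]
        ring
    _ ≤ 1 * (|S p.1 - S ν| * |T p.2| + |S ν| * |T p.2 - T φ|) := by
        rw [← abs_mul (S p.1 - S ν), ← abs_mul (S ν)]
        exact mul_le_mul (abs_sin_le_one _) (abs_add_le _ _) (abs_nonneg _) zero_le_one
    _ ≤ 1 * (K * √(centralVersin ν φ p.1 p.2) * B
        + |S ν| * (L * ((√κ)⁻¹ * √(centralVersin ν φ p.1 p.2)))) := by
        gcongr
        exacts [(hK _ _).trans (by gcongr), hB _, (hL _ _).trans (by gcongr)]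
    _ = _ := by ring

end Jump

theorem isAngularMode_one : IsAngularMode 0 0 1 1 where
  polar_contDiff := contDiff_const
  polar_periodic _ := rfl
  polar_eq θ := by simp
  azimuth_contDiff := contDiff_const
  azimuth_periodic _ := rfl
  azimuth_eq t := by simp

theorem isRadialSolution_one : IsRadialSolution 0 0 1 where
  contDiff := contDiff_const
  radial_eq e := by simp

section UnitDensity

variable {ν η : ℝ}

theorem newtonMomentDeriv_one (ν φ : ℝ) {e : ℝ} (he : e ∈ Set.Ioo 0 η) :
    newtonMomentDeriv η ν φ 1 1 e = 0 := by
  simpa using isAngularMode_one.newtonMoment_wronskian ν φ isRadialSolution_one he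

theorem setIntegral_sin_mul_inv_sqrt {b : ℝ} (hb : 0 < b) (c : ℝ) :
    ∫ θ in Set.Icc 0 π, sin θ * (√(b ^ 2 + (cos θ - c) ^ 2))⁻¹
      = arsinh ((1 - c) / b) + arsinh ((1 + c) / b) := by
  have hpos (θ : ℝ) : 0 < b ^ 2 + (cos θ - c) ^ 2 := by positivity
  have hsqrt (θ : ℝ) : √(1 + ((cos θ - c) / b) ^ 2) = √(b ^ 2 + (cos θ - c) ^ 2) / b := by
    nth_rewrite 3 [← sqrt_sq hb.le]
    rw [← sqrt_div (hpos θ).le]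
    congr 1
    field_simp
  have hderiv (θ : ℝ) : HasDerivAt (fun θ => -arsinh ((cos θ - c) / b))
      (sin θ * (√(b ^ 2 + (cos θ - c) ^ 2))⁻¹) θ := by
    refine ((((hasDerivAt_cos θ).sub_const c).div_const b).arsinh.fun_neg).congr_deriv ?_
    have := (sqrt_pos.2 (hpos θ)).ne'
    rw [hsqrt, smul_eq_mul]
    field_simp
  rw [setIntegral_Icc_eq_sub_of_hasDerivAt pi_pos.le (fun θ _ => hderiv θ)
    (continuousOn_sin.mul (continuousOn_invSqrt (by fun_prop) fun θ _ => hpos θ)), cos_pi, cos_zero,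
    ← neg_add' 1 c, neg_div, arsinh_neg]
  ring

-- The focal segment `e = 0` is seen by `(η, ν, φ)` independently of the azimuth.
theorem newtonMoment_one_zero (φ : ℝ) (hν : ν ∈ Set.Ioo 0 π) (hη : 0 < η) :
    newtonMoment η ν φ 1 1 0 = 2 * π * (arsinh ((1 - cosh η * cos ν) / (sinh η * sin ν))
      + arsinh ((1 + cosh η * cos ν) / (sinh η * sin ν))) := by
  have hb : 0 < sinh η * sin ν := mul_pos (sinh_pos_iff.2 hη) (sin_pos_of_mem_Ioo hν)
  have hD (p : ℝ × ℝ) : angularDensity 1 1 p * (√(sqDist η ν φ 0 p.1 p.2))⁻¹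
      = sin p.1 * (√((sinh η * sin ν) ^ 2 + (cos p.1 - cosh η * cos ν) ^ 2))⁻¹ * 1 := by
    simp [angularDensity, sqDist]
  simp only [newtonMoment, hD]
  rw [restrict_angularBox,
    integral_prod_mul (fun θ => sin θ * (√((sinh η * sin ν) ^ 2 + (cos θ - cosh η * cos ν) ^ 2))⁻¹)
      fun _ => 1, setIntegral_sin_mul_inv_sqrt hb]
  simp [two_pi_pos.le]
  ring

theorem newtonMoment_one_surface (φ : ℝ) (hν : ν ∈ Set.Ioo 0 π) (hη : 0 < η) :
    newtonMoment η ν φ 1 1 η = newtonMoment η ν φ 1 1 0 := by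
  have hderiv {e : ℝ} (he : |e| < η) := hasDerivAt_newtonMoment (e := e) (η := η) ν φ
    (S := 1) (T := 1) continuous_const continuous_const he
  have hcont : ContinuousOn (newtonMoment η ν φ 1 1) (Set.Icc 0 η) := fun e he => by
    rcases he.2.eq_or_lt with rfl | hlt
    · exact (continuousWithinAt_Iio_iff_Iic.1 (tendsto_newtonMoment_surface φ hν hη
        continuous_const continuous_const)).mono fun x hx => hx.2
    · exact (hderiv (abs_lt.2 ⟨by linarith [he.1], hlt⟩)).continuousAt.continuousWithinAt
  obtain ⟨c, hc, hslope⟩ := exists_hasDerivAt_eq_slope _ _ hη hcont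
    fun e he => hderiv (abs_lt.2 ⟨by linarith [he.1], he.2⟩)
  rw [newtonMomentDeriv_one ν φ hc, eq_comm, div_eq_zero_iff, sub_zero, sub_eq_zero] at hslope
  exact hslope.resolve_right hη.ne'

theorem hasDerivAt_arsinh_prolate (hν : ν ∈ Set.Ioo 0 π) (hη : 0 < η) :
    HasDerivAt (fun x => arsinh ((1 - cosh x * cos ν) / (sinh x * sin ν))) (-(sinh η)⁻¹) η := by
  have hsin := sin_pos_of_mem_Ioo hν
  have := sinh_pos_iff.2 hη
  have hdist : 0 < cosh η - cos ν :=
    sub_pos.2 ((cos_le_one ν).trans_lt (one_lt_cosh.2 hη.ne'))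
  have hsqrt : √(1 + ((1 - cosh η * cos ν) / (sinh η * sin ν)) ^ 2)
      = (cosh η - cos ν) / (sinh η * sin ν) := by
    rw [sqrt_eq_iff_mul_self_eq (by positivity) (by positivity)]
    field_simp
    linear_combination sinh η ^ 2 * sin_sq_add_cos_sq ν - (1 - cos ν ^ 2) * cosh_sq η
  refine ((((hasDerivAt_cosh η).mul_const (cos ν)).const_sub 1).fun_div
    ((hasDerivAt_sinh η).mul_const (sin ν)) (by positivity)).arsinh.congr_deriv ?_
  rw [hsqrt, smul_eq_mul]
  field_simp
  linear_combination cos ν * cosh_sq η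

theorem newtonMomentDeriv_one_surface (φ : ℝ) (hν : ν ∈ Set.Ioo 0 π) (hη : 0 < η) :
    newtonMomentDeriv η ν φ 1 1 η = -(2 * π / sinh η) := by
  have hν' : π - ν ∈ Set.Ioo 0 π := ⟨sub_pos.2 hν.2, sub_lt_self _ hν.1⟩
  have hexplicit := ((hasDerivAt_arsinh_prolate hν hη).fun_add
    (hasDerivAt_arsinh_prolate hν' hη)).const_mul (2 * π)
  simp only [cos_pi_sub, sin_pi_sub, mul_neg, sub_neg_eq_add] at hexplicit
  have hsurface := hasDerivAt_newtonMoment_surface φ hν hη (S := 1) (T := 1) continuous_const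
    continuous_const
  have := hsurface.unique (hexplicit.congr_of_eventuallyEq ?_)
  · linear_combination this / 2
  · filter_upwards [lt_mem_nhds hη] with x hx
    rw [newtonMoment_one_surface φ hν hx, newtonMoment_one_zero φ hν hx]

end UnitDensity

theorem setIntegral_density_sub_const_mul {η ν φ e : ℝ} {S T : ℝ → ℝ} {c : ℝ}
    (h : IntegrableOn (fun p => angularDensity S T p *
      invSqrtDeriv (sqDist η ν φ e p.1 p.2) (sqDistE η ν φ e p.1 p.2)) angularBox)
    (h₁ : IntegrableOn (fun p => angularDensity 1 1 p *
      invSqrtDeriv (sqDist η ν φ e p.1 p.2) (sqDistE η ν φ e p.1 p.2)) angularBox) :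
    ∫ p in angularBox, (angularDensity S T p - c * angularDensity 1 1 p) *
        invSqrtDeriv (sqDist η ν φ e p.1 p.2) (sqDistE η ν φ e p.1 p.2)
      = newtonMomentDeriv η ν φ S T e - c * newtonMomentDeriv η ν φ 1 1 e := by
  simp only [sub_mul, mul_assoc]
  rw [integral_sub h (h₁.const_mul c), integral_const_mul]
  rfl

-- Subtracting the value of the density at the target tames the kernel without changing the
-- interior derivative, because the potential of the unit density is constant inside.
theorem IsAngularMode.newtonMoment_surface_ode {ℓ μ η ν : ℝ} {S T P : ℝ → ℝ}
    (hST : IsAngularMode ℓ μ S T) (hP : IsRadialSolution ℓ μ P) (φ : ℝ) (hν : ν ∈ Set.Ioo 0 π)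
    (hη : 0 < η) :
    P η * (newtonMomentDeriv η ν φ S T η + 2 * π / sinh η * (S ν * T φ))
      = deriv P η * newtonMoment η ν φ S T η := by
  have hS := hST.continuous_polar
  have hT := hST.continuous_azimuth
  obtain ⟨C, hC⟩ := exists_abs_density_jump_le (hST.polar_contDiff.of_le one_le_two)
    hST.polar_periodic (hST.azimuth_contDiff.of_le one_le_two) hST.azimuth_periodic φ hν
  have hd := continuous_angularDensity hS hT
  have hd₁ := continuous_angularDensity (S := 1) (T := 1) continuous_const continuous_const
  have hP' : Continuous (deriv P) := hP.contDiff.continuous_deriv one_le_two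
  have hlim := tendsto_setIntegral_mul_invSqrtDeriv_surface φ hν hη
    (f := fun p => angularDensity S T p - S ν * T φ * angularDensity 1 1 p)
    (hd.sub (continuous_const.mul hd₁)).measurable hC
  have hint {e : ℝ} (he : e ∈ Set.Ioo 0 η) {f : ℝ × ℝ → ℝ} (hf : Continuous f) :
      IntegrableOn (fun p => f p *
        invSqrtDeriv (sqDist η ν φ e p.1 p.2) (sqDistE η ν φ e p.1 p.2)) angularBox :=
    (hf.mul (continuous_invSqrtDeriv_sqDist ν φ (abs_lt.2 ⟨by linarith [he.1, he.2], he.2⟩)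
      (by fun_prop))).continuousOn.integrableOn_compact isCompact_angularBox
  have hsurface := tendsto_nhds_unique_of_eventuallyEq
    ((hP.contDiff.continuous.tendsto η).mono_left nhdsWithin_le_nhds |>.mul hlim)
    ((hP'.tendsto η).mono_left nhdsWithin_le_nhds |>.mul
      (tendsto_newtonMoment_surface φ hν hη hS hT)) <| by
    filter_upwards [Ioo_mem_nhdsLT hη] with e he
    rw [setIntegral_density_sub_const_mul (hint he hd) (hint he hd₁), newtonMomentDeriv_one ν φ he,
      mul_zero, sub_zero, hST.newtonMoment_wronskian ν φ hP he]
  rw [setIntegral_density_sub_const_mul (integrableOn_newtonMomentDeriv_surface φ hν hη hS hT)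
    (integrableOn_newtonMomentDeriv_surface φ hν hη continuous_const continuous_const),
    newtonMomentDeriv_one_surface φ hν hη] at hsurface
  linear_combination hsurface

/-! ### Separated solutions -/

section SecondSolution

variable {ℓ μ κ ν : ℝ} {S T P Q Q' : ℝ → ℝ} (hST : IsAngularMode ℓ μ S T)
  (hP : IsRadialSolution ℓ μ P) (hPpos : ∀ x ∈ Set.Ioi (0 : ℝ), 0 < P x)
  (hQ : ∀ x ∈ Set.Ioi (0 : ℝ), HasDerivAt Q (Q' x) x)
  (hW : ∀ x ∈ Set.Ioi (0 : ℝ), κ * (sinh x * (P x * Q' x - deriv P x * Q x)) = -1)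
include hST hP hPpos hQ hW

theorem IsAngularMode.hasDerivAt_newtonMoment_div_sq_sub (φ : ℝ) (hν : ν ∈ Set.Ioo 0 π) :
    ∀ x ∈ Set.Ioi (0 : ℝ), HasDerivAt (fun x => newtonMoment x ν φ S T x / P x ^ 2
      - 4 * π * κ * (S ν * T φ) * (Q x / P x)) 0 x := fun x hx => by
  have hP' := (hP.contDiff.differentiable (by norm_num) x).hasDerivAt
  have hPx := (hPpos x hx).ne'
  have hsinh : sinh x ≠ 0 := (sinh_pos_iff.2 hx).ne'
  have hode := hST.newtonMoment_surface_ode hP φ hν hx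
  have hWx := hW x hx
  refine (((hasDerivAt_newtonMoment_surface φ hν hx hST.continuous_polar
    hST.continuous_azimuth).fun_div (hP'.fun_pow 2) (pow_ne_zero 2 hPx)).fun_sub
    (((hQ x hx).fun_div hP' hPx).const_mul _)).congr_deriv ?_
  field_simp at hode
  field_simp
  refine mul_left_cancel₀ hsinh ?_
  linear_combination 2 * P x * hode - 4 * π * S ν * T φ * P x ^ 2 * hWx

theorem IsAngularMode.newtonMoment_surface_eq {c : ℝ} (hc : 0 < c) (hcP : ∀ᶠ x in atTop, c ≤ P x)
    (hQP : Tendsto (fun x => Q x / P x) atTop (𝓝 0)) (φ : ℝ) (hν : ν ∈ Set.Ioo 0 π) {η : ℝ}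
    (hη : 0 < η) :
    newtonMoment η ν φ S T η = 4 * π * κ * (S ν * T φ) * (P η * Q η) := by
  have hconst := hST.hasDerivAt_newtonMoment_div_sq_sub hP hPpos hQ hW φ hν
  have hquot : Tendsto (fun x => newtonMoment x ν φ S T x / P x ^ 2) atTop (𝓝 0) := by
    refine squeeze_zero_norm' (a := fun x => |newtonMoment x ν φ S T x| / c ^ 2) ?_ ?_
    · filter_upwards [hcP] with x hx
      rw [norm_eq_abs, abs_div, abs_sq]
      gcongr
    · simpa using (tendsto_newtonMoment_surface_atTop φ hν hST.continuous_polar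
        hST.continuous_azimuth).abs.div_const (c ^ 2)
  have hlim := hquot.sub (hQP.const_mul (4 * π * κ * (S ν * T φ)))
  rw [mul_zero, sub_zero] at hlim
  have hzero := tendsto_nhds_unique (hlim.congr' <| by
    filter_upwards [eventually_gt_atTop 0] with x hx using
      eqOn_const_of_hasDerivAt_zero isOpen_Ioi isPreconnected_Ioi hconst hx hη) tendsto_const_nhds
  have hPη := (hPpos η hη).ne'
  field_simp at hzero
  linear_combination -hzero

theorem IsAngularMode.newtonMomentDeriv_surface_eq {c : ℝ} (hc : 0 < c)
    (hcP : ∀ᶠ x in atTop, c ≤ P x) (hQP : Tendsto (fun x => Q x / P x) atTop (𝓝 0)) (φ : ℝ)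
    (hν : ν ∈ Set.Ioo 0 π) {η : ℝ} (hη : 0 < η) :
    newtonMomentDeriv η ν φ S T η
      = 2 * π * κ * (S ν * T φ) * (deriv P η * Q η + P η * Q' η) := by
  have hPQ := ((hP.contDiff.differentiable (by norm_num) η).hasDerivAt.fun_mul (hQ η hη)).const_mul
    (4 * π * κ * (S ν * T φ))
  have := (hasDerivAt_newtonMoment_surface φ hν hη hST.continuous_polar
    hST.continuous_azimuth).unique (hPQ.congr_of_eventuallyEq ?_)
  · linear_combination this / 2
  · filter_upwards [lt_mem_nhds hη] with x hx using
      hST.newtonMoment_surface_eq hP hPpos hQ hW hc hcP hQP φ hν hx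

end SecondSolution

/-- The associated function `fᵐ · q⁽ᵐ⁾ ∘ g` of a sequence `q` of successive derivatives. With
`(f, g) = (sin, cos)` or `(sinh, cosh)` it gives the associated Legendre functions in angular and
hyperbolic variables. -/
def assocLift (f g : ℝ → ℝ) (q : ℕ → ℝ → ℝ) (m : ℕ) (x : ℝ) : ℝ := f x ^ m * q m (g x)

section AssocLift

variable {f g : ℝ → ℝ} {q : ℕ → ℝ → ℝ} {ε : ℝ}

theorem hasDerivAt_assocLift (m : ℕ) {x : ℝ} (hf : HasDerivAt f (g x) x)
    (hg : HasDerivAt g (ε * f x) x) (hq : HasDerivAt (q m) (q (m + 1) (g x)) (g x)) :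
    HasDerivAt (assocLift f g q m)
      (m * f x ^ (m - 1) * g x * q m (g x) + ε * assocLift f g q (m + 1) x) x := by
  refine ((hf.fun_pow m).mul (hq.comp x hg)).congr_deriv ?_
  rw [assocLift, Function.comp_apply]
  ring

theorem mul_deriv_assocLift (m : ℕ) {x : ℝ} (hf : HasDerivAt f (g x) x)
    (hg : HasDerivAt g (ε * f x) x) (hq : HasDerivAt (q m) (q (m + 1) (g x)) (g x)) :
    f x * deriv (assocLift f g q m) x
      = m * g x * assocLift f g q m x + ε * f x * assocLift f g q (m + 1) x := by
  have hpow : (m : ℝ) * (f x * f x ^ (m - 1)) = m * f x ^ m := by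
    cases m with
    | zero => simp
    | succ k => rw [Nat.add_sub_cancel, pow_succ']
  rw [(hasDerivAt_assocLift m hf hg hq).deriv]
  simp only [assocLift]
  linear_combination g x * q m (g x) * hpow

-- Multiplying by `f` twice keeps every power of `f` nonnegative in the computation.
theorem assocLift_ode (m : ℕ) {ℓ : ℝ} (hε : ε ^ 2 = 1) (hfg : ∀ x, f x ^ 2 = ε * (g x ^ 2 - 1))
    (hf : ∀ x, HasDerivAt f (g x) x) (hg : ∀ x, HasDerivAt g (ε * f x) x)
    (hq : ∀ m x, HasDerivAt (q m) (q (m + 1) x) x)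
    (hode : ∀ x, (x ^ 2 - 1) * q (m + 2) x + 2 * (m + 1) * x * q (m + 1) x
      - (ℓ - m * (m + 1)) * q m x = 0) (x : ℝ) :
    f x * deriv (fun y => f y * deriv (assocLift f g q m) y) x
      = (m ^ 2 + ε * ℓ * f x ^ 2) * assocLift f g q m x := by
  have hladder (m : ℕ) (y : ℝ) := mul_deriv_assocLift m (hf y) (hg y) (hq m (g y))
  have hderiv (m : ℕ) :=
    (hasDerivAt_assocLift m (hf x) (hg x) (hq m (g x))).differentiableAt.hasDerivAt
  have hsecond := ((((hg x).const_mul (m : ℝ)).fun_mul (hderiv m)).fun_add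
    (((hf x).const_mul ε).fun_mul (hderiv (m + 1)))).deriv
  have hm := hladder m x
  have hm1 := hladder (m + 1) x
  have hg2 : g x ^ 2 = 1 + ε * f x ^ 2 := by linear_combination -ε * hfg x - (g x ^ 2 - 1) * hε
  have hodex := hode (g x)
  rw [hg2] at hodex
  rw [funext (hladder m), hsecond]
  simp only [assocLift] at hm hm1 ⊢
  push_cast at hm1
  linear_combination m * g x * hm + ε * f x * hm1 + ε * f x ^ m * f x ^ 2 * hodex
    + m ^ 2 * f x ^ m * q m (g x) * hg2

end AssocLift

section LegendreModes

variable (n m : ℕ)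

/-- The Ferrers function `𝖯ₙᵐ(cos θ)`. -/
def polarMode : ℝ → ℝ := assocLift sin cos (legendrePDeriv n) m

/-- The azimuthal factor `cos (m t + β)`. -/
def azimuthMode (β t : ℝ) : ℝ := cos (m * t + β)

/-- The associated Legendre function `Pₙᵐ(cosh η)`. -/
def radialP : ℝ → ℝ := assocLift sinh cosh (legendrePDeriv n) m

/-- The associated Legendre function `Qₙᵐ(cosh η)`. -/
def radialQ : ℝ → ℝ := assocLift sinh cosh (legendreQDeriv n) m

theorem polarMode_ode (θ : ℝ) : sin θ * deriv (fun x => sin x * deriv (polarMode n m) x) θ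
    = (m ^ 2 - n * (n + 1) * sin θ ^ 2) * polarMode n m θ := by
  rw [polarMode, assocLift_ode (ε := -1) m (by norm_num)
    (fun x => by linear_combination sin_sq_add_cos_sq x) hasDerivAt_sin
    (fun x => by simpa using hasDerivAt_cos x) (hasDerivAt_legendrePDeriv n)
    (legendrePDeriv_ode n m)]
  ring

theorem radialP_ode (e : ℝ) : sinh e * deriv (fun x => sinh x * deriv (radialP n m) x) e
    = (n * (n + 1) * sinh e ^ 2 + m ^ 2) * radialP n m e := by
  rw [radialP, assocLift_ode (ε := 1) m (by norm_num)
    (fun x => by linear_combination -cosh_sq x) hasDerivAt_sinh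
    (fun x => by simpa using hasDerivAt_cosh x) (hasDerivAt_legendrePDeriv n)
    (legendrePDeriv_ode n m)]
  ring

theorem deriv_deriv_azimuthMode (β t : ℝ) :
    deriv (deriv (azimuthMode m β)) t = -m ^ 2 * azimuthMode m β t := by
  have hlin (t : ℝ) : HasDerivAt (fun t => m * t + β) (m : ℝ) t := by
    simpa using ((hasDerivAt_id t).const_mul (m : ℝ)).add_const β
  have hfirst : deriv (azimuthMode m β) = fun t => -sin (m * t + β) * m :=
    funext fun t => (hlin t).cos.deriv
  rw [hfirst, ((hlin t).sin.fun_neg.mul_const _).deriv, azimuthMode]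
  ring

theorem isAngularMode_legendre (β : ℝ) :
    IsAngularMode (n * (n + 1)) (m ^ 2) (polarMode n m) (azimuthMode m β) where
  polar_contDiff := (contDiff_sin.pow m).mul ((contDiff_legendrePDeriv n m).comp contDiff_cos)
  polar_periodic θ := by simp only [polarMode, assocLift, sin_add_two_pi, cos_add_two_pi]
  polar_eq := polarMode_ode n m
  azimuth_contDiff := contDiff_cos.comp ((contDiff_const.mul contDiff_id).add contDiff_const)
  azimuth_periodic t := by
    rw [azimuthMode, mul_add, add_right_comm, cos_add_nat_mul_two_pi, azimuthMode]
  azimuth_eq := deriv_deriv_azimuthMode m β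

theorem isRadialSolution_radialP :
    IsRadialSolution (n * (n + 1)) (m ^ 2) (radialP n m) where
  contDiff := (contDiff_sinh.pow m).mul ((contDiff_legendrePDeriv n m).comp contDiff_cosh)
  radial_eq := radialP_ode n m

theorem differentiableAt_radialQ {η : ℝ} (hη : 0 < η) : DifferentiableAt ℝ (radialQ n m) η :=
  (hasDerivAt_assocLift (ε := 1) m (hasDerivAt_sinh η) (by simpa using hasDerivAt_cosh η)
    (hasDerivAt_legendreQDeriv n m (one_lt_cosh.2 hη.ne'))).differentiableAt

variable {n m}

theorem radialP_pos (hm : m ≤ n) {η : ℝ} (hη : 0 < η) : 0 < radialP n m η :=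
  mul_pos (pow_pos (sinh_pos_iff.2 hη) m) (legendrePDeriv_pos hm (one_le_cosh η))

theorem radial_wronskian (hm : m ≤ n) {η : ℝ} (hη : 0 < η) :
    (n - m).factorial / (n + m).factorial * (-1) ^ m * (sinh η *
      (radialP n m η * deriv (radialQ n m) η - deriv (radialP n m) η * radialQ n m η)) = -1 := by
  have hcosh : HasDerivAt cosh (1 * sinh η) η := by simpa using hasDerivAt_cosh η
  have hη' := one_lt_cosh.2 hη.ne'
  have hP := mul_deriv_assocLift m (hasDerivAt_sinh η) hcosh (hasDerivAt_legendrePDeriv n m _)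
  have hQ := mul_deriv_assocLift m (hasDerivAt_sinh η) hcosh (hasDerivAt_legendreQDeriv n m hη')
  have hW := legendreWronskian hm hη'
  rw [cosh_sq, add_sub_cancel_right] at hW
  have hW' : sinh η * (radialP n m η * deriv (radialQ n m) η
      - deriv (radialP n m) η * radialQ n m η)
      = (-1) ^ (m + 1) * ((n + m).factorial / (n - m).factorial) := by
    rw [← hW]
    simp only [radialP, radialQ, assocLift] at hP hQ ⊢
    linear_combination sinh η ^ m * legendrePDeriv n m (cosh η) * hQ
      - sinh η ^ m * legendreQDeriv n m (cosh η) * hP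
  have hsign : ((-1 : ℝ) ^ m) ^ 2 = 1 := by rw [← pow_mul, mul_comm, pow_mul]; norm_num
  rw [hW', pow_succ]
  field_simp
  linear_combination -hsign

theorem tendsto_radialQ_div_radialP (hm : m ≤ n) :
    Tendsto (fun x => radialQ n m x / radialP n m x) atTop (𝓝 0) := by
  have hcosh : Tendsto cosh atTop atTop :=
    tendsto_atTop_mono (fun x => (sinh_lt_cosh x).le) sinhOrderIso.tendsto_atTop
  have hlim := ((tendsto_legendreQDeriv_atTop n m).comp hcosh).abs.div_const
    (legendrePDeriv n m 1)
  rw [abs_zero, zero_div] at hlim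
  refine squeeze_zero_norm' ?_ hlim
  filter_upwards [eventually_gt_atTop 0] with x hx
  rw [radialQ, radialP, assocLift, assocLift,
    mul_div_mul_left _ _ (pow_pos (sinh_pos_iff.2 hx) m).ne', norm_eq_abs, abs_div,
    abs_of_pos (legendrePDeriv_pos hm (one_le_cosh x))]
  exact div_le_div_of_nonneg_left (abs_nonneg _) (legendrePDeriv_one_pos hm)
    (legendrePDeriv_one_le n m (one_le_cosh x))

theorem eventually_legendrePDeriv_one_le_radialP (n m : ℕ) :
    ∀ᶠ x in atTop, legendrePDeriv n m 1 ≤ radialP n m x := by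
  filter_upwards [sinhOrderIso.tendsto_atTop.eventually_ge_atTop 1] with x hx
  exact (legendrePDeriv_one_le n m (one_le_cosh x)).trans (le_mul_of_one_le_left
    ((legendrePDeriv_one_nonneg n m).trans (legendrePDeriv_one_le n m (one_le_cosh x)))
    (one_le_pow₀ hx))

theorem newtonMomentDeriv_legendre (hm : m ≤ n) (β φ : ℝ) {ν η : ℝ} (hν : ν ∈ Set.Ioo 0 π)
    (hη : 0 < η) :
    newtonMomentDeriv η ν φ (polarMode n m) (azimuthMode m β) η
      = 2 * π * ((n - m).factorial / (n + m).factorial * (-1) ^ m)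
        * (polarMode n m ν * azimuthMode m β φ)
        * (deriv (radialP n m) η * radialQ n m η + radialP n m η * deriv (radialQ n m) η) :=
  (isAngularMode_legendre n m β).newtonMomentDeriv_surface_eq (isRadialSolution_radialP n m)
    (fun _ => radialP_pos hm) (fun _ hx => (differentiableAt_radialQ n m hx).hasDerivAt)
    (fun _ => radial_wronskian hm) (legendrePDeriv_one_pos hm)
    (eventually_legendrePDeriv_one_le_radialP n m) (tendsto_radialQ_div_radialP hm) φ hν hη

end LegendreModes

/-! ### Spheroidal coordinates -/

theorem sqrt_cosh_sq_sub_one {η : ℝ} (hη : 0 ≤ η) : √(cosh η ^ 2 - 1) = sinh η := by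
  rw [cosh_sq, add_sub_cancel_right, sqrt_sq (sinh_nonneg_iff.2 hη)]

section Prolate

variable (a : ℝ) {η θ ν : ℝ} (t φ : ℝ)

theorem prolate_cosh_cos (hη : 0 ≤ η) (hθ : θ ∈ Set.Icc 0 π) :
    prolate a (cosh η) (cos θ) t
      = !₂[a * sinh η * sin θ * cos t, a * sinh η * sin θ * sin t, a * cosh η * cos θ] := by
  rw [prolate, sqrt_cosh_sq_sub_one hη, ← sin_eq_sqrt_one_sub_cos_sq hθ.1 hθ.2]
  rfl

theorem hasDerivAt_sqrt_sq_sub_one (hη : 0 < η) :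
    HasDerivAt (fun w : ℝ => √(w ^ 2 - 1)) (cosh η / sinh η) (cosh η) := by
  have hpos : 0 < cosh η ^ 2 - 1 := by
    rw [cosh_sq, add_sub_cancel_right]
    exact pow_pos (sinh_pos_iff.2 hη) 2
  refine (((hasDerivAt_pow 2 (cosh η)).sub_const 1).sqrt hpos.ne').congr_deriv ?_
  rw [sqrt_cosh_sq_sub_one hη.le]
  simp only [Nat.cast_ofNat, Nat.add_one_sub_one, pow_one]
  field_simp

theorem deriv_prolate (hη : 0 < η) (hθ : θ ∈ Set.Icc 0 π) :
    deriv (fun w => prolate a w (cos θ) t) (cosh η)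
      = !₂[a * (cosh η / sinh η) * sin θ * cos t, a * (cosh η / sinh η) * sin θ * sin t,
          a * cos θ] := by
  have hsqrt := (hasDerivAt_sqrt_sq_sub_one hη).const_mul a
  refine ((PiLp.continuousLinearEquiv 2 ℝ fun _ : Fin 3 => ℝ).symm.hasFDerivAt.comp_hasDerivAt _
    (hasDerivAt_pi.2 fun i => ?_)).deriv
  fin_cases i
  · simpa [prolate, ← sin_eq_sqrt_one_sub_cos_sq hθ.1 hθ.2]
      using (hsqrt.mul_const (sin θ)).mul_const (cos t)
  · simpa [prolate, ← sin_eq_sqrt_one_sub_cos_sq hθ.1 hθ.2]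
      using (hsqrt.mul_const (sin θ)).mul_const (sin t)
  · simpa [prolate] using ((hasDerivAt_id (cosh η)).const_mul a).mul_const (cos θ)

variable {a}

theorem norm_prolate_sub (ha : 0 ≤ a) (hη : 0 ≤ η) (hθ : θ ∈ Set.Icc 0 π) (hν : ν ∈ Set.Icc 0 π) :
    ‖prolate a (cosh η) (cos ν) φ - prolate a (cosh η) (cos θ) t‖ = a * √(sqDist η ν φ η θ t) := by
  have hD : 0 ≤ sqDist η ν φ η θ t := by
    unfold sqDist
    positivity
  rw [prolate_cosh_cos a t hη hθ, prolate_cosh_cos a φ hη hν, EuclideanSpace.norm_eq,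
    sqrt_eq_iff_eq_sq (by positivity) (by positivity), mul_pow, sq_sqrt hD]
  simp only [Fin.sum_univ_three, sqDist_eq_expansion, cos_sub, norm_eq_abs, sq_abs,
    PiLp.sub_apply, Matrix.cons_val]
  linear_combination a ^ 2 * (cos ν ^ 2 + cos θ ^ 2) * cosh_sq η
    + a ^ 2 * sinh η ^ 2 * (sin ν ^ 2 * sin_sq_add_cos_sq φ + sin θ ^ 2 * sin_sq_add_cos_sq t
      + sin_sq_add_cos_sq θ + sin_sq_add_cos_sq ν)

theorem norm_deriv_prolate (ha : 0 ≤ a) (hη : 0 < η) (hθ : θ ∈ Set.Icc 0 π) :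
    ‖deriv (fun w => prolate a w (cos θ) t) (cosh η)‖
      = a * √(cosh η ^ 2 - cos θ ^ 2) / sinh η := by
  have := sinh_pos_iff.2 hη
  have hmetric : 0 ≤ cosh η ^ 2 - cos θ ^ 2 := by
    linarith [cosh_sq η, sq_nonneg (sinh η), cos_sq_le_one θ]
  rw [deriv_prolate a t hη hθ, EuclideanSpace.norm_eq,
    sqrt_eq_iff_eq_sq (by positivity) (by positivity), div_pow, mul_pow, sq_sqrt hmetric]
  simp only [Fin.sum_univ_three, norm_eq_abs, sq_abs, Matrix.cons_val]
  field_simp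
  linear_combination a ^ 2 * (cosh η ^ 2 * sin θ ^ 2 * sin_sq_add_cos_sq t
    + cosh η ^ 2 * sin_sq_add_cos_sq θ - cos θ ^ 2 * cosh_sq η)

theorem inner_deriv_prolate (a : ℝ) (hη : 0 < η) (hθ : θ ∈ Set.Icc 0 π) (hν : ν ∈ Set.Icc 0 π) :
    inner ℝ (deriv (fun w => prolate a w (cos θ) t) (cosh η))
        (prolate a (cosh η) (cos ν) φ - prolate a (cosh η) (cos θ) t)
      = -(a ^ 2 * cosh η * centralVersin ν φ θ t) := by
  have := sinh_pos_iff.2 hη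
  rw [deriv_prolate a t hη hθ, prolate_cosh_cos a t hη.le hθ, prolate_cosh_cos a φ hη.le hν]
  simp only [PiLp.inner_apply, Fin.sum_univ_three, centralVersin, cos_sub, PiLp.sub_apply,
    Matrix.cons_val, RCLike.inner_apply, conj_trivial]
  field_simp
  linear_combination -a ^ 2 * (sin θ ^ 2 * sin_sq_add_cos_sq t + sin_sq_add_cos_sq θ)

end Prolate

/-- The kernel of the double layer potential at the target `x`, including the area element. -/
def doubleLayerKernel (a u₀ : ℝ) (x : EuclideanSpace ℝ (Fin 3)) (s t : ℝ) : ℝ :=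
  inner ℝ (unitNormalP a u₀ s t) (x - prolate a u₀ s t) / (4 * π * ‖x - prolate a u₀ s t‖ ^ 3)
    * areaElemP a u₀ s

theorem doubleLayerKernel_prolate {a η θ ν : ℝ} (ha : 0 < a) (t φ : ℝ) (hη : 0 < η)
    (hθ : θ ∈ Set.Icc 0 π) (hν : ν ∈ Set.Icc 0 π) :
    doubleLayerKernel a (cosh η) (prolate a (cosh η) (cos ν) φ) (cos θ) t
      = sinh η / (4 * π) * invSqrtDeriv (sqDist η ν φ η θ t) (sqDistE η ν φ η θ t) := by
  have hsinh := (sinh_pos_iff.2 hη).ne'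
  have hmetric : √(cosh η ^ 2 - cos θ ^ 2) ≠ 0 := (sqrt_pos.2 (by
    linarith [cosh_sq η, sq_pos_of_pos (sinh_pos_iff.2 hη), cos_sq_le_one θ])).ne'
  rw [doubleLayerKernel, unitNormalP, areaElemP, real_inner_smul_left,
    inner_deriv_prolate t φ a hη hθ hν, norm_deriv_prolate t ha.le hη hθ,
    norm_prolate_sub t φ ha.le hη.le hθ hν, sqrt_cosh_sq_sub_one hη.le, sqDistE_self, invSqrtDeriv]
  field_simp

section CosChangeOfVariables

variable {E : Type*} [NormedAddCommGroup E] [NormedSpace ℝ E] {B : Set ℝ}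

theorem det_toSpanSingleton_prodMap_id (c : ℝ) :
    ((ContinuousLinearMap.toSpanSingleton ℝ c).prodMap (ContinuousLinearMap.id ℝ ℝ)).det = c := by
  have hcoe : (((ContinuousLinearMap.toSpanSingleton ℝ c).prodMap (ContinuousLinearMap.id ℝ ℝ) :
      ℝ × ℝ →L[ℝ] ℝ × ℝ) : ℝ × ℝ →ₗ[ℝ] ℝ × ℝ) = LinearMap.prodMap
        ((ContinuousLinearMap.toSpanSingleton ℝ c : ℝ →L[ℝ] ℝ) : ℝ →ₗ[ℝ] ℝ) LinearMap.id := rfl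
  rw [ContinuousLinearMap.det, hcoe, LinearMap.det_prodMap, LinearMap.det_id, mul_one]
  simp

theorem hasFDerivWithinAt_cos_prod (p : ℝ × ℝ) (s : Set (ℝ × ℝ)) :
    HasFDerivWithinAt (Prod.map cos id) ((ContinuousLinearMap.toSpanSingleton ℝ (-sin p.1)).prodMap
      (ContinuousLinearMap.id ℝ ℝ)) s p :=
  (HasFDerivAt.prodMap p (hasDerivAt_cos p.1).hasFDerivAt (hasFDerivAt_id p.2)).hasFDerivWithinAt

theorem injOn_cos_prod : Set.InjOn (Prod.map cos id) (Set.Icc 0 π ×ˢ B) :=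
  injOn_cos.prodMap (Set.injOn_id B)

theorem image_cos_prod :
    Prod.map cos id '' (Set.Icc 0 π ×ˢ B) = Set.Icc (-1 : ℝ) 1 ×ˢ B := by
  rw [Set.prodMap_image_prod, bijOn_cos.image_eq, Set.image_id]

theorem abs_det_cos_prod_smul {p : ℝ × ℝ} (hp : p ∈ Set.Icc 0 π ×ˢ B) (z : E) :
    |((ContinuousLinearMap.toSpanSingleton ℝ (-sin p.1)).prodMap
      (ContinuousLinearMap.id ℝ ℝ)).det| • z = sin p.1 • z := by
  rw [det_toSpanSingleton_prodMap_id, abs_neg, abs_of_nonneg (sin_nonneg_of_mem_Icc hp.1)]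

theorem integrableOn_cos_prod_iff (hB : MeasurableSet B) (g : ℝ × ℝ → E) :
    IntegrableOn g (Set.Icc (-1 : ℝ) 1 ×ˢ B)
      ↔ IntegrableOn (fun p => sin p.1 • g (cos p.1, p.2)) (Set.Icc 0 π ×ˢ B) := by
  have hm : MeasurableSet (Set.Icc 0 π ×ˢ B) := measurableSet_Icc.prod hB
  rw [← image_cos_prod, integrableOn_image_iff_integrableOn_abs_det_fderiv_smul volume hm
    (fun p _ => hasFDerivWithinAt_cos_prod p _) injOn_cos_prod]
  exact integrableOn_congr_fun (fun p hp => abs_det_cos_prod_smul hp _) hm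

theorem setIntegral_cos_prod (hB : MeasurableSet B) (g : ℝ × ℝ → E) :
    ∫ p in Set.Icc (-1) 1 ×ˢ B, g p = ∫ p in Set.Icc 0 π ×ˢ B, sin p.1 • g (cos p.1, p.2) := by
  have hm : MeasurableSet (Set.Icc 0 π ×ˢ B) := measurableSet_Icc.prod hB
  rw [← image_cos_prod, integral_image_eq_integral_abs_det_fderiv_smul volume hm
    (fun p _ => hasFDerivWithinAt_cos_prod p _) injOn_cos_prod]
  exact setIntegral_congr_fun hm fun p hp => abs_det_cos_prod_smul hp _

end CosChangeOfVariables

section AssociatedLegendre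

variable {n m : ℕ} {η : ℝ}

theorem assocLift_sinh_cosh (q : ℕ → ℝ → ℝ) (m : ℕ) (hη : 0 ≤ η) :
    assocLift sinh cosh q m η = √(cosh η ^ 2 - 1) ^ m * q m (cosh η) := by
  rw [sqrt_cosh_sq_sub_one hη, assocLift]

theorem deriv_assocLift_sinh_cosh {F : ℝ → ℝ} {q : ℕ → ℝ → ℝ}
    (hF : ∀ u, 1 < u → F u = √(u ^ 2 - 1) ^ m * q m u) (hη : 0 < η)
    (hq : DifferentiableAt ℝ (q m) (cosh η)) :
    deriv (assocLift sinh cosh q m) η = deriv F (cosh η) * sinh η := by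
  have hF' : DifferentiableAt ℝ F (cosh η) :=
    (((hasDerivAt_sqrt_sq_sub_one hη).differentiableAt.pow m).mul hq).congr_of_eventuallyEq <| by
      filter_upwards [lt_mem_nhds (one_lt_cosh.2 hη.ne')] with u hu using hF u hu
  refine ((hF'.hasDerivAt.comp η (hasDerivAt_cosh η)).congr_of_eventuallyEq ?_).deriv
  filter_upwards [lt_mem_nhds hη] with x hx
  rw [assocLift_sinh_cosh q m hx.le, Function.comp_apply, hF _ (one_lt_cosh.2 hx.ne')]

theorem assocP_eq (n m : ℕ) (u : ℝ) : assocP n m u = √(u ^ 2 - 1) ^ m * legendrePDeriv n m u := by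
  rw [assocP, iteratedDeriv_legendreP]

theorem assocQ_eq (n m : ℕ) {u : ℝ} (hu : 1 < u) :
    assocQ n m u = √(u ^ 2 - 1) ^ m * legendreQDeriv n m u := by
  rw [assocQ, iteratedDeriv_legendreQ n m hu]

theorem radialP_eq_assocP (hη : 0 ≤ η) : radialP n m η = assocP n m (cosh η) := by
  rw [radialP, assocLift_sinh_cosh _ m hη, assocP_eq]

theorem radialQ_eq_assocQ (hη : 0 < η) : radialQ n m η = assocQ n m (cosh η) := by
  rw [radialQ, assocLift_sinh_cosh _ m hη.le, assocQ_eq n m (one_lt_cosh.2 hη.ne')]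

theorem deriv_radialP (hη : 0 < η) :
    deriv (radialP n m) η = deriv (assocP n m) (cosh η) * sinh η :=
  deriv_assocLift_sinh_cosh (fun u _ => assocP_eq n m u) hη
    (hasDerivAt_legendrePDeriv n m _).differentiableAt

theorem deriv_radialQ (hη : 0 < η) :
    deriv (radialQ n m) η = deriv (assocQ n m) (cosh η) * sinh η :=
  deriv_assocLift_sinh_cosh (fun _ hu => assocQ_eq n m hu) hη
    (hasDerivAt_legendreQDeriv n m (one_lt_cosh.2 hη.ne')).differentiableAt

end AssociatedLegendre

/-- The normalisation constant `Nₙᵐ` of the spherical harmonic `Yₙᵐ`. -/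
def sphYNorm (n m : ℕ) : ℝ :=
  √((2 * n + 1) / (4 * π)) * √((n - m).factorial / (n + m).factorial)

theorem exp_I_mul_eq_azimuthMode (m : ℕ) (t : ℝ) :
    Complex.exp (Complex.I * m * t)
      = azimuthMode m 0 t + Complex.I * azimuthMode m (-(π / 2)) t := by
  have hexp : Complex.I * m * t = ((m * t : ℝ) : ℂ) * Complex.I := by
    push_cast
    ring
  rw [hexp, Complex.exp_mul_I, azimuthMode, azimuthMode, add_zero, ← sub_eq_add_neg,
    cos_sub_pi_div_two, Complex.ofReal_cos, Complex.ofReal_sin, mul_comm Complex.I]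

theorem sphY_cos (n m : ℕ) {θ : ℝ} (hθ : θ ∈ Set.Icc 0 π) (t : ℝ) :
    sphY n m (cos θ) t = (sphYNorm n m * polarMode n m θ : ℝ)
      * (azimuthMode m 0 t + Complex.I * azimuthMode m (-(π / 2)) t) := by
  rw [sphY, exp_I_mul_eq_azimuthMode, ferrersP, ← sin_eq_sqrt_one_sub_cos_sq hθ.1 hθ.2,
    iteratedDeriv_legendreP]
  rfl

section DoubleLayer

variable {a η ν : ℝ} (n m : ℕ) (φ : ℝ)

/-- The integrand of `newtonMomentDeriv` on the surface itself, for the Legendre mode of azimuthal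
phase `β`. -/
def legendreMomentDerivDensity (n m : ℕ) (β η ν φ : ℝ) (p : ℝ × ℝ) : ℝ :=
  angularDensity (polarMode n m) (azimuthMode m β) p *
    invSqrtDeriv (sqDist η ν φ η p.1 p.2) (sqDistE η ν φ η p.1 p.2)

theorem integrableOn_legendreMomentDerivDensity (β : ℝ) (hη : 0 < η) (hν : ν ∈ Set.Ioo 0 π) :
    IntegrableOn (fun p => (legendreMomentDerivDensity n m β η ν φ p : ℂ)) angularBox :=
  (integrableOn_newtonMomentDeriv_surface φ hν hη
    (isAngularMode_legendre n m β).continuous_polar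
    (isAngularMode_legendre n m β).continuous_azimuth).ofReal

-- The imaginary part of `exp (i m t)` is the phase `-π / 2`, so one real computation serves both.
theorem sin_smul_doubleLayerKernel_mul_sphY (ha : 0 < a) (hη : 0 < η) (hν : ν ∈ Set.Icc 0 π)
    {p : ℝ × ℝ} (hp : p ∈ angularBox) :
    sin p.1 • ((doubleLayerKernel a (cosh η) (prolate a (cosh η) (cos ν) φ) (cos p.1) p.2 : ℂ)
        * sphY n m (cos p.1) p.2)
      = (sinh η / (4 * π) * sphYNorm n m : ℝ) * (legendreMomentDerivDensity n m 0 η ν φ p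
        + Complex.I * legendreMomentDerivDensity n m (-(π / 2)) η ν φ p) := by
  rw [doubleLayerKernel_prolate ha p.2 φ hη hp.1 hν, sphY_cos n m hp.1, Complex.real_smul]
  simp only [legendreMomentDerivDensity, angularDensity]
  push_cast
  ring

theorem integrableOn_doubleLayerKernel_mul_sphY (ha : 0 < a) (hη : 0 < η)
    (hν : ν ∈ Set.Ioo 0 π) :
    IntegrableOn (fun p : ℝ × ℝ =>
        (doubleLayerKernel a (cosh η) (prolate a (cosh η) (cos ν) φ) p.1 p.2 : ℂ)
          * sphY n m p.1 p.2)
      (Set.Icc (-1) 1 ×ˢ Set.Icc 0 (2 * π)) := by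
  have hM (β : ℝ) := integrableOn_legendreMomentDerivDensity n m φ β hη hν
  rw [integrableOn_cos_prod_iff measurableSet_Icc]
  refine (integrableOn_congr_fun (fun p hp => sin_smul_doubleLayerKernel_mul_sphY n m φ ha hη
    (Set.Ioo_subset_Icc_self hν) hp) isCompact_angularBox.measurableSet).2 ?_
  exact ((hM 0).add ((hM (-(π / 2))).const_mul Complex.I)).const_mul _

theorem setIntegral_doubleLayerKernel_mul_sphY (hm : m ≤ n) (ha : 0 < a) (hη : 0 < η)
    (hν : ν ∈ Set.Ioo 0 π) :
    ∫ p in Set.Icc (-1) 1 ×ˢ Set.Icc 0 (2 * π),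
        (doubleLayerKernel a (cosh η) (prolate a (cosh η) (cos ν) φ) p.1 p.2 : ℂ)
          * sphY n m p.1 p.2
      = ((n - m).factorial / (n + m).factorial * (-1) ^ m * sinh η * (1 / 2) *
          (deriv (radialP n m) η * radialQ n m η + radialP n m η * deriv (radialQ n m) η) : ℝ)
        * sphY n m (cos ν) φ := by
  have hν' := Set.Ioo_subset_Icc_self hν
  have hM (β : ℝ) := integrableOn_legendreMomentDerivDensity n m φ β hη hν
  have hvalue (β : ℝ) : ∫ p in angularBox, legendreMomentDerivDensity n m β η ν φ p = _ :=
    newtonMomentDeriv_legendre hm β φ hν hη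
  rw [setIntegral_cos_prod measurableSet_Icc]
  refine (setIntegral_congr_fun isCompact_angularBox.measurableSet fun p hp =>
    sin_smul_doubleLayerKernel_mul_sphY n m φ ha hη hν' hp).trans ?_
  rw [integral_const_mul, integral_add (hM 0) ((hM (-(π / 2))).const_mul Complex.I),
    integral_const_mul, integral_complex_ofReal, integral_complex_ofReal, hvalue, hvalue,
    sphY_cos n m hν']
  have hπ : (π : ℂ) ≠ 0 := Complex.ofReal_ne_zero.2 pi_ne_zero
  push_cast
  field_simp
  ring

theorem doubleLayerP_eq_setIntegral {u₀ : ℝ} {μ : ℝ → ℝ → ℂ} {x : EuclideanSpace ℝ (Fin 3)}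
    (h : IntegrableOn (fun p : ℝ × ℝ => (doubleLayerKernel a u₀ x p.1 p.2 : ℂ) * μ p.1 p.2)
      (Set.Icc (-1) 1 ×ˢ Set.Icc 0 (2 * π))) :
    doubleLayerP a u₀ μ x = ∫ p in Set.Icc (-1) 1 ×ˢ Set.Icc 0 (2 * π),
      (doubleLayerKernel a u₀ x p.1 p.2 : ℂ) * μ p.1 p.2 := by
  rw [IntegrableOn, Measure.volume_eq_prod, ← Measure.prod_restrict] at h
  rw [Measure.volume_eq_prod, ← Measure.prod_restrict, integral_prod_symm _ h, doubleLayerP]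
  simp only [intervalIntegral.integral_of_le two_pi_pos.le,
    intervalIntegral.integral_of_le (neg_one_lt_zero.trans zero_lt_one : (-1 : ℝ) < 1).le,
    integral_Icc_eq_integral_Ioc]
  rfl

end DoubleLayer

theorem doubleLayer_on_surface_eval (a : ℝ) (ha : 0 < a) (u₀ : ℝ) (hu₀ : 1 < u₀)
    (n m : ℕ) (hm : m ≤ n) (v φ : ℝ) (hv : v ∈ Set.Ioo (-1 : ℝ) 1) :
    IntegrableOn
      (fun p : ℝ × ℝ =>
        ((((inner ℝ (unitNormalP a u₀ p.1 p.2) (prolate a u₀ v φ - prolate a u₀ p.1 p.2) : ℝ) /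
            (4 * Real.pi * ‖prolate a u₀ v φ - prolate a u₀ p.1 p.2‖ ^ 3)) *
              areaElemP a u₀ p.1 : ℝ) : ℂ) * sphY n m p.1 p.2)
      (Set.Icc (-1 : ℝ) 1 ×ˢ Set.Icc (0 : ℝ) (2 * Real.pi)) volume ∧
    doubleLayerP a u₀ (fun s t => sphY n m s t) (prolate a u₀ v φ) =
      (((((n - m).factorial : ℝ) / ((n + m).factorial : ℝ)) * (-1 : ℝ) ^ m * (u₀ ^ 2 - 1) *
          (1 / 2) * (deriv (assocP n m) u₀ * assocQ n m u₀ +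
            deriv (assocQ n m) u₀ * assocP n m u₀) : ℝ) : ℂ) * sphY n m v φ := by
  obtain ⟨η, hη, rfl⟩ : ∃ η, 0 < η ∧ cosh η = u₀ :=
    ⟨arcosh u₀, arcosh_pos hu₀, cosh_arcosh hu₀.le⟩
  obtain ⟨ν, hν, rfl⟩ : ∃ ν, ν ∈ Set.Ioo 0 π ∧ cos ν = v :=
    ⟨arccos v, ⟨arccos_pos.2 hv.2, arccos_lt_pi.2 hv.1⟩, cos_arccos hv.1.le hv.2.le⟩
  have hint := integrableOn_doubleLayerKernel_mul_sphY n m φ ha hη hν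
  refine ⟨hint, ?_⟩
  rw [doubleLayerP_eq_setIntegral hint, setIntegral_doubleLayerKernel_mul_sphY n m φ hm ha hη hν,
    deriv_radialP hη, deriv_radialQ hη, radialP_eq_assocP hη.le, radialQ_eq_assocQ hη,
    cosh_sq η, add_sub_cancel_right]
  congr 2
  ring
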